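/- Let n ≥ 3 and let G be a connected well-covered unicyclic graph of order 2n. Then C_n* ⪯ G and G ⪯ U_n*. -/

import Mathlib

/-!
The proof first replaces `G` by a corona `H*` with `H` unicyclic of order `n` and the same
independence polynomial, and then compares `H` with `C_n` and `U_n`.

*Reduction to coronas* (`exists_corona_of_wellCovered`). A unicyclic graph of order `2n` has an
independent set of `n` vertices, because deleting one vertex can make it bipartite. In a
well-covered graph without isolated vertices every independent set satisfies Hall's condition
(`WellCovered.card_le_nbhd`). Hence `G` has a perfect matching `μ` each of whose edges meets every
maximal independent set, and a neighbour of `v` other than `μ v` is adjacent to every neighbour of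
`μ v` other than `v` (`PM.adj_of_adj`). If every matching edge has an end of degree one, `G` is a
corona (`exists_corona`). Otherwise a matching edge `x, μ x` lies on a four-cycle `x, w, z, μ x`.
This is the only cycle, so all other matching edges are pendant, and replacing the edge `μ x, z` by
`x, z` gives a unicyclic corona with the same independence polynomial (`PM.reroute`).

*Comparison.* One has `I(H*, x) = (1 + x)^n I(H, x / (1 + x))`, and for `x` between the largest root
of `I(H*)` and `0` all induced subgraphs of `H` have nonnegative polynomial at `-t = x / (1 + x)`,
positive away from the root. Write `Z(S)` for the value at `-t` of the polynomial of the subgraph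
induced on `S`; then `Z(S ∪ {v}) = Z(S) - t Z(S \ N(v))` for `v ∉ S`.

For the lower bound `C_n* ⪯ G`, log-submodularity of `Z` gives the inequality `Z_join` for two
rooted pieces joined by an edge. By induction, `Z(S) / Z(S - u)` is at most the corresponding ratio
of path polynomials when `S` is connected, and of cycle polynomials when `S` also contains a cycle
and is assembled as in `RC`. Building `H` up from a cycle one vertex at a time yields
`Z(H) ≤ Z(C_n)` (`Z_le_cyc`).

For the upper bound `G ⪯ U_n*`, `H` is built from one vertex by adding vertices with one earlier
neighbour, except for a single vertex with two. Since `Z(S) ≤ (1 - t)^|S|`, each step loses at most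
what it loses for `U_n`, so `Z(H) ≥ Z(U_n)` (`Unicyclic.le_Z`). In particular the polynomial of
`U_n*` is nonpositive at the largest root of `I(H*)`, so the interval on which the comparison is
required lies inside the one on which it was proved.
-/

open Polynomial SimpleGraph

/-- A finset of vertices is independent: pairwise nonadjacent. -/
def IsIndepFinset {V : Type*} (G : SimpleGraph V) (s : Finset V) : Prop :=
  ∀ u ∈ s, ∀ v ∈ s, ¬ G.Adj u v

open Classical in
/-- The independence polynomial of a finite graph, with real coefficients. -/
noncomputable def indepPoly {V : Type*} [Fintype V] (G : SimpleGraph V) : Polynomial ℝ :=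
  ∑ s : Finset V, if IsIndepFinset G s then (X : Polynomial ℝ) ^ s.card else 0

/-- `xi G` : the largest real root of the independence polynomial of `G`. -/
noncomputable def xi {V : Type*} [Fintype V] (G : SimpleGraph V) : ℝ :=
  sSup {x : ℝ | (indepPoly G).eval x = 0}

/-- `Pre H G` (`H ⪯ G`) : `I(H,x) ≥ I(G,x)` for all `x ∈ [ξ(G), 0]`. -/
def Pre {V W : Type*} [Fintype V] [Fintype W] (H : SimpleGraph W) (G : SimpleGraph V) : Prop :=
  ∀ x ∈ Set.Icc (xi G) 0, (indepPoly G).eval x ≤ (indepPoly H).eval x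

/-- `SPre H G` (`H ≺ G`). -/
def SPre {V W : Type*} [Fintype V] [Fintype W] (H : SimpleGraph W) (G : SimpleGraph V) : Prop :=
  Pre H G ∧ indepPoly H ≠ indepPoly G

open Classical in
/-- A graph is well-covered if all maximal independent sets have the same size. -/
def WellCovered {V : Type*} (G : SimpleGraph V) : Prop :=
  ∀ s t : Finset V,
    IsIndepFinset G s → (∀ v ∉ s, ¬ IsIndepFinset G (insert v s)) →
    IsIndepFinset G t → (∀ v ∉ t, ¬ IsIndepFinset G (insert v t)) →
    s.card = t.card

/-- A connected unicyclic graph: connected with as many edges as vertices. -/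
def Unicyclic {V : Type*} [Fintype V] (G : SimpleGraph V) : Prop :=
  G.Connected ∧ G.edgeSet.ncard = Fintype.card V

/-- The graph star (corona with `K₁`) of `G`: each vertex `inl v` gets a pendant
vertex `inr v`. -/
def corona {V : Type*} (G : SimpleGraph V) : SimpleGraph (V ⊕ V) :=
  SimpleGraph.fromRel (fun a b =>
    match a, b with
    | Sum.inl u, Sum.inl v => G.Adj u v
    | Sum.inl u, Sum.inr v => u = v
    | _, _ => False)

/-- `Ugraph n` (`U_n`, `n ≥ 3`): a triangle `0,1,2` with `n - 3` pendant vertices attached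
to vertex `0`. -/
def Ugraph (n : ℕ) : SimpleGraph (Fin n) :=
  SimpleGraph.fromRel (fun i j => i.val = 0 ∨ (i.val = 1 ∧ j.val = 2))

/-- `Dgraph n` (`D_n`, `n ≥ 4`): a path `0,1,...,n-1` plus the chord `{0,2}`, i.e. a
triangle with a path on `n - 3` vertices attached. -/
def Dgraph (n : ℕ) : SimpleGraph (Fin n) :=
  SimpleGraph.fromRel (fun i j => j.val = i.val + 1 ∨ (i.val = 0 ∧ j.val = 2))

/-- `starGraph n` (`S_n = K_{1,n-1}`): vertex `0` adjacent to all other vertices. -/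
def starGraph (n : ℕ) : SimpleGraph (Fin n) :=
  SimpleGraph.fromRel (fun i _ => i.val = 0)

/-- `Mgraph n` (`M_n`, odd `n ≥ 5`): a triangle `0,1,2` with `(n-3)/2` paths of length two
attached at vertex `0`; the middle vertices are the odd indices `3,5,...,n-2` and the leaf
attached to middle vertex `i` is `i + 1`. -/
def Mgraph (n : ℕ) : SimpleGraph (Fin n) :=
  SimpleGraph.fromRel (fun i j =>
    (i.val = 0 ∧ (j.val ≤ 2 ∨ j.val % 2 = 1)) ∨ (i.val = 1 ∧ j.val = 2) ∨
    (i.val % 2 = 1 ∧ 3 ≤ i.val ∧ j.val = i.val + 1))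

/-- `SPgraph g k ℓ` (`G(g,k,ℓ)`, for `g ∈ {3,5}` and `k + ℓ ≥ 1`): a cycle on the vertices
`0,...,g-1`, a copy of `P_k*` on the vertices `g,...,g+2k-1` (path vertices at even offsets,
each followed by its pendant vertex) joined to the cycle vertex `0` by an edge to the
path end `g`, and a copy of `P_ℓ*` on the vertices `g+2k,...,g+2k+2ℓ-1` joined to the cycle
vertex `2` by an edge to the path end `g+2k`. -/
def SPgraph (g k ℓ : ℕ) : SimpleGraph (Fin (g + 2*k + 2*ℓ)) :=
  SimpleGraph.fromRel (fun i j =>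
    (i.val < g ∧ j.val < g ∧ (j.val = i.val + 1 ∨ (i.val = 0 ∧ j.val = g - 1))) ∨
    (i.val = 0 ∧ 0 < k ∧ j.val = g) ∨
    (g ≤ i.val ∧ i.val < g + 2*k ∧ (i.val - g) % 2 = 0 ∧
      (j.val = i.val + 1 ∨ (j.val = i.val + 2 ∧ j.val < g + 2*k))) ∨
    (i.val = 2 ∧ 0 < ℓ ∧ j.val = g + 2*k) ∨
    (g + 2*k ≤ i.val ∧ (i.val - (g + 2*k)) % 2 = 0 ∧
      (j.val = i.val + 1 ∨ j.val = i.val + 2)))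

/-- `Gtree n` (`G_{2n}`, `n ≥ 5`): the tree on `2n` vertices with path `v_1 … v_n` at
indices `0,…,n-1`, `z_1` at index `n`, `y_1, y_2` at `n+1, n+2`, `x_1, x_2` at `n+3, n+4`
(with `v_3 z_1`, `v_3 y_1`, `y_1 y_2`, `v_5 x_1`, `x_1 x_2` edges), and pendant vertices
`w_j` at index `n + j - 1` attached to `v_j` for `6 ≤ j ≤ n`. -/
def Gtree (n : ℕ) : SimpleGraph (Fin (2*n)) :=
  SimpleGraph.fromRel (fun a b =>
    (a.val + 1 = b.val ∧ b.val < n) ∨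
    (a.val = 2 ∧ (b.val = n ∨ b.val = n + 1)) ∨
    (a.val = n + 1 ∧ b.val = n + 2) ∨
    (a.val = 4 ∧ b.val = n + 3) ∨
    (a.val = n + 3 ∧ b.val = n + 4) ∨
    (5 ≤ a.val ∧ a.val < n ∧ b.val = n + a.val))

/-! ### The independence polynomial on vertex subsets -/

open Classical in
/-- `Z G t S` is the independence polynomial of the subgraph of `G` induced on `S`,
evaluated at `-t`. -/
noncomputable def Z {V : Type*} (G : SimpleGraph V) (t : ℝ) (S : Finset V) : ℝ :=
  ∑ A ∈ S.powerset, if IsIndepFinset G A then (-t) ^ A.card else 0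

open Classical in
/-- The vertices of `S` that are not adjacent to `v`. -/
noncomputable def dl {V : Type*} (G : SimpleGraph V) (v : V) (S : Finset V) : Finset V :=
  S.filter (fun w => ¬ G.Adj v w)

lemma mem_dl {V : Type*} {G : SimpleGraph V} {v w : V} {S : Finset V} :
    w ∈ dl G v S ↔ w ∈ S ∧ ¬ G.Adj v w := by
  classical
  simp [dl]

lemma dl_subset {V : Type*} (G : SimpleGraph V) (v : V) (S : Finset V) : dl G v S ⊆ S :=
  fun _ h => (mem_dl.1 h).1

lemma isIndepFinset_mono {V : Type*} {G : SimpleGraph V} {A B : Finset V} (h : A ⊆ B)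
    (hB : IsIndepFinset G B) : IsIndepFinset G A :=
  fun u hu v hv => hB u (h hu) v (h hv)

lemma isIndepFinset_insert {V : Type*} [DecidableEq V] {G : SimpleGraph V} {A : Finset V} {v : V} :
    IsIndepFinset G (insert v A) ↔ IsIndepFinset G A ∧ ∀ w ∈ A, ¬ G.Adj v w := by
  constructor
  · intro h
    exact ⟨isIndepFinset_mono (Finset.subset_insert _ _) h,
      fun w hw => h v (Finset.mem_insert_self _ _) w (Finset.mem_insert_of_mem hw)⟩
  · rintro ⟨h1, h2⟩ a ha b hb
    rcases Finset.mem_insert.1 ha with h3 | h3 <;> rcases Finset.mem_insert.1 hb with h4 | h4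
    · rw [h3, h4]
      exact G.loopless.irrefl _
    · rw [h3]
      exact h2 b h4
    · rw [h4]
      exact fun h => h2 a h3 h.symm
    · exact h1 a h3 b h4

lemma eval_indepPoly {V : Type*} [Fintype V] (G : SimpleGraph V) (x : ℝ) :
    (indepPoly G).eval x = Z G (-x) Finset.univ := by
  classical
  simp only [indepPoly, Z, Finset.powerset_univ, Polynomial.eval_finsetSum]
  refine Finset.sum_congr rfl fun s _ => ?_
  split_ifs <;> simp

lemma Z_empty {V : Type*} (G : SimpleGraph V) (t : ℝ) : Z G t ∅ = 1 := by
  simp [Z, IsIndepFinset]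

lemma Z_zero {V : Type*} (G : SimpleGraph V) (S : Finset V) : Z G 0 S = 1 := by
  classical
  unfold Z
  rw [Finset.sum_eq_single ∅]
  · simp [IsIndepFinset]
  · intro b _ hb
    have : b.card ≠ 0 := by simpa using hb
    simp [this]
  · simp

lemma continuous_Z {V : Type*} (G : SimpleGraph V) (S : Finset V) :
    Continuous (fun t => Z G t S) := by
  classical
  unfold Z
  refine continuous_finsetSum _ fun A _ => ?_
  split_ifs <;> fun_prop

/-- Deletion recursion: an independent set either avoids `v`, or consists of `v` and an
independent set of non-neighbours of `v`. -/
lemma Z_insert {V : Type*} [DecidableEq V] (G : SimpleGraph V) (t : ℝ) {v : V} {S : Finset V}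
    (hv : v ∉ S) : Z G t (insert v S) = Z G t S - t * Z G t (dl G v S) := by
  classical
  unfold Z
  rw [Finset.sum_powerset_insert hv, sub_eq_add_neg, ← neg_mul, Finset.mul_sum]
  congr 1
  symm
  refine Finset.sum_subset_zero_on_sdiff (Finset.powerset_mono.2 (dl_subset G v S)) ?_ ?_
  · intro A hA
    rw [Finset.mem_sdiff, Finset.mem_powerset, Finset.mem_powerset] at hA
    rw [if_neg]
    rw [isIndepFinset_insert]
    rintro ⟨_, h⟩
    exact hA.2 fun w hw => mem_dl.2 ⟨hA.1 hw, h w hw⟩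
  · intro A hA
    rw [Finset.mem_powerset] at hA
    have hvA : v ∉ A := fun h => hv (mem_dl.1 (hA h)).1
    have hi : IsIndepFinset G (insert v A) ↔ IsIndepFinset G A := by
      rw [isIndepFinset_insert]
      exact ⟨fun h => h.1, fun h => ⟨h, fun w hw => (mem_dl.1 (hA hw)).2⟩⟩
    rw [Finset.card_insert_of_notMem hvA]
    simp only [hi]
    split_ifs
    · ring
    · ring

lemma Z_singleton {V : Type*} (G : SimpleGraph V) (t : ℝ) (v : V) : Z G t {v} = 1 - t := by
  classical
  have h := Z_insert G t (Finset.notMem_empty v)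
  have h2 : dl G v (∅ : Finset V) = ∅ := Finset.subset_empty.1 (dl_subset _ _ _)
  simpa [h2, Z_empty] using h

/-- All induced subgraphs of `G` have a nonnegative independence polynomial at `-t`. -/
def NN {V : Type*} (G : SimpleGraph V) (t : ℝ) : Prop := ∀ S : Finset V, 0 ≤ Z G t S

lemma Z_mono {V : Type*} {G : SimpleGraph V} {t : ℝ} (ht : 0 ≤ t) (h : NN G t) {S T : Finset V}
    (hST : S ⊆ T) : Z G t T ≤ Z G t S := by
  classical
  obtain ⟨U, hU⟩ : ∃ U, T = S ∪ U := ⟨T, (Finset.union_eq_right.2 hST).symm⟩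
  subst hU
  clear hST
  induction U using Finset.induction_on with
  | empty => simp
  | insert a U ha ih =>
    rw [Finset.union_insert]
    by_cases hm : a ∈ S ∪ U
    · rwa [Finset.insert_eq_of_mem hm]
    · rw [Z_insert _ _ hm]
      have := mul_nonneg ht (h (dl G a (S ∪ U)))
      linarith

lemma Z_insert_le {V : Type*} [DecidableEq V] {G : SimpleGraph V} {t : ℝ} (ht : 0 ≤ t)
    (h : NN G t) {v : V} {S T : Finset V} (hv : v ∉ S) (hT : dl G v S ⊆ T) :
    Z G t (insert v S) ≤ Z G t S - t * Z G t T := by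
  rw [Z_insert _ _ hv]
  have := mul_le_mul_of_nonneg_left (Z_mono ht h hT) ht
  linarith

lemma Z_le_pow {V : Type*} [DecidableEq V] {G : SimpleGraph V} {t : ℝ} (ht : 0 ≤ t)
    (h : NN G t) (h1 : t ≤ 1) (S U : Finset V) (hd : Disjoint S U) :
    Z G t (S ∪ U) ≤ Z G t S * (1 - t) ^ U.card := by
  induction U using Finset.induction_on with
  | empty => simp
  | insert a U ha ih =>
    rw [Finset.disjoint_insert_right] at hd
    rw [Finset.union_insert, Finset.card_insert_of_notMem ha]
    have hm : a ∉ S ∪ U := by simp [hd.1, ha]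
    have h2 := Z_insert_le ht h hm (dl_subset G a (S ∪ U))
    have h3 := ih hd.2
    have : (Z G t (S ∪ U)) * (1 - t) ≤ (Z G t S * (1 - t) ^ U.card) * (1 - t) :=
      mul_le_mul_of_nonneg_right h3 (by linarith)
    rw [pow_succ]
    linarith

lemma root_neg {V : Type*} [Fintype V] {G : SimpleGraph V} {x : ℝ}
    (h : (indepPoly G).eval x = 0) : x < 0 := by
  classical
  by_contra! hx
  have : 0 < (indepPoly G).eval x := by
    rw [eval_indepPoly, Z]
    refine Finset.sum_pos' (fun A _ => ?_) ⟨∅, by simp, by simp [IsIndepFinset]⟩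
    split_ifs
    · simpa using pow_nonneg hx _
    · exact le_rfl
  linarith

lemma bddAbove_roots {V : Type*} [Fintype V] (G : SimpleGraph V) :
    BddAbove {x : ℝ | (indepPoly G).eval x = 0} := ⟨0, fun _ hx => (root_neg hx).le⟩

lemma le_xi {V : Type*} [Fintype V] {G : SimpleGraph V} {x : ℝ}
    (h : (indepPoly G).eval x = 0) : x ≤ xi G := le_csSup (bddAbove_roots G) h

lemma xi_nonpos {V : Type*} [Fintype V] (G : SimpleGraph V) : xi G ≤ 0 :=
  Real.sSup_nonpos fun _ hx => (root_neg hx).le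

/-- Up to the root of smallest modulus, all induced subgraphs have nonnegative independence
polynomial: at the first zero of any of them, monotonicity forces `G` itself to vanish. -/
lemma NN_of_no_root {V : Type*} [Fintype V] {G : SimpleGraph V} {x : ℝ} (hx0 : x ≤ 0)
    (hr : ∀ y, x < y → (indepPoly G).eval y ≠ 0) : NN G (-x) := by
  classical
  by_contra hcon
  have hcon : ∃ S, Z G (-x) S < 0 := by simpa [NN] using hcon
  obtain ⟨S, hS⟩ := hcon
  set B : Set ℝ := {s | s ∈ Set.Icc 0 (-x) ∧ ∃ S, Z G s S ≤ 0} with hB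
  have hBc : IsCompact B := by
    have : B = Set.Icc 0 (-x) ∩ ⋃ S : Finset V, {s | Z G s S ≤ 0} := by
      ext s; simp [hB]
    rw [this]
    refine isCompact_Icc.inter_right (isClosed_iUnion_of_finite fun S => ?_)
    exact isClosed_le (continuous_Z G S) continuous_const
  have hBn : B.Nonempty := ⟨-x, ⟨by linarith, le_rfl⟩, S, hS.le⟩
  obtain ⟨s, hsB, hmin⟩ := hBc.exists_isLeast hBn
  obtain ⟨⟨hs0, hsx⟩, T, hT⟩ := hsB
  have hs0' : 0 < s := by
    rcases hs0.eq_or_lt with h | h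
    · subst h; rw [Z_zero] at hT; linarith
    · exact h
  -- just before `s` all values are positive, so at `s` they are nonnegative
  have hnn : NN G s := by
    intro U
    have hcl : s ∈ closure (Set.Ioo 0 s) := by
      rw [closure_Ioo hs0'.ne]; exact ⟨hs0, le_rfl⟩
    refine closure_minimal (t := {r | 0 ≤ Z G r U}) ?_
      (isClosed_le continuous_const (continuous_Z G U)) hcl
    intro r hr
    by_contra hlt
    have hlt : Z G r U < 0 := by simpa using hlt
    have := hmin ⟨⟨hr.1.le, hr.2.le.trans hsx⟩, U, hlt.le⟩
    exact absurd hr.2 (not_lt.2 this)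
  have h0 : Z G s Finset.univ = 0 :=
    le_antisymm ((Z_mono hs0 hnn (Finset.subset_univ T)).trans hT) (hnn _)
  have h1 : (indepPoly G).eval (-s) = 0 := by rw [eval_indepPoly]; simpa using h0
  have h3 : s = -x := by
    by_contra hne
    have := lt_of_le_of_ne hsx hne
    exact hr (-s) (by linarith) h1
  rw [h3] at hnn
  exact absurd (hnn S) (not_le.2 hS)

lemma NN_of_xi_le {V : Type*} [Fintype V] {G : SimpleGraph V} {x : ℝ} (hx : xi G ≤ x)
    (hx0 : x ≤ 0) : NN G (-x) :=
  NN_of_no_root hx0 fun _ hy h => absurd (le_xi h) (not_le.2 (hx.trans_lt hy))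

/-- The largest real root exists: without roots the one-vertex subgraphs would be nonnegative
everywhere on the negative axis. -/
lemma eval_xi {V : Type*} [Fintype V] [Nonempty V] (G : SimpleGraph V) :
    (indepPoly G).eval (xi G) = 0 := by
  have hne : {x : ℝ | (indepPoly G).eval x = 0}.Nonempty := by
    by_contra hcon
    obtain ⟨v⟩ := ‹Nonempty V›
    have h := NN_of_no_root (G := G) (x := -2) (by norm_num) (fun y _ h => hcon ⟨y, h⟩) {v}
    rw [Z_singleton] at h
    norm_num at h
  exact IsClosed.csSup_mem (isClosed_eq (indepPoly G).continuous continuous_const) hne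
    (bddAbove_roots G)

lemma Z_pos_of_xi_lt {V : Type*} [Fintype V] {G : SimpleGraph V} {x : ℝ} (hx : xi G < x)
    (hx0 : x ≤ 0) (S : Finset V) : 0 < Z G (-x) S := by
  have hn := NN_of_xi_le hx.le hx0
  refine lt_of_lt_of_le ?_ (Z_mono (by linarith) hn (Finset.subset_univ S))
  refine lt_of_le_of_ne (hn _) fun h => ?_
  rw [← eval_indepPoly] at h
  exact absurd (le_xi h.symm) (not_le.2 hx)

/-! ### Path and cycle sequences -/

/-- `pathSeq t k` is the independence polynomial of the path on `k` vertices at `-t`. -/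
def pathSeq (t : ℝ) : ℕ → ℝ
  | 0 => 1
  | 1 => 1 - t
  | k + 2 => pathSeq t (k + 1) - t * pathSeq t k

/-- `cycSeq t k` is the independence polynomial of the cycle on `k ≥ 3` vertices at `-t`,
extended to `k < 3` by the recurrence. -/
def cycSeq (t : ℝ) : ℕ → ℝ
  | 0 => 2
  | 1 => 1
  | k + 2 => cycSeq t (k + 1) - t * cycSeq t k

/-- The common recurrence of `pathSeq` and `cycSeq`. -/
def Rec (t : ℝ) (s : ℕ → ℝ) : Prop := ∀ k, s (k + 2) = s (k + 1) - t * s k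

lemma rec_path (t : ℝ) : Rec t (pathSeq t) := fun _ => rfl

lemma rec_cyc (t : ℝ) : Rec t (cycSeq t) := fun _ => rfl

lemma path_zero (t : ℝ) : pathSeq t 0 = 1 := rfl

lemma path_one (t : ℝ) : pathSeq t 1 = 1 - t := rfl

/-- Cutting a path or cycle sequence at position `a`: addition formula for the solutions
of the recurrence. -/
lemma split_left {t : ℝ} {s : ℕ → ℝ} (hs : Rec t s) (d : ℕ) : ∀ a, s (a + d + 2) =
    pathSeq t (a + 1) * s d - pathSeq t a * (s d - s (d + 1))
  | 0 => by rw [zero_add, path_zero, zero_add, path_one, hs]; ring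
  | 1 => by
    rw [show 1 + d + 2 = d + 1 + 2 by ring, hs, hs, rec_path t 0, zero_add, path_zero, path_one]
    ring
  | a + 2 => by
    have h1 := split_left hs d a
    have h2 := split_left hs d (a + 1)
    have h3 := rec_path t a
    have h4 := rec_path t (a + 1)
    rw [show a + 2 + d + 2 = a + d + 2 + 2 by ring, hs, show a + d + 2 + 1 = a + 1 + d + 2 by ring]
    linear_combination h2 - t * h1 - s d * h4 + (s d - s (d + 1)) * h3

lemma split_right {t : ℝ} {s : ℕ → ℝ} (hs : Rec t s) (a : ℕ) : ∀ d, s (a + d + 2) =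
    pathSeq t d * s (a + 1) - s a * (pathSeq t d - pathSeq t (d + 1))
  | 0 => by rw [add_zero, zero_add, path_zero, path_one, hs]; ring
  | d + 1 => by
    rw [show a + (d + 1) + 2 = d + (a + 1) + 2 by ring, split_left hs (a + 1) d, hs, rec_path t d]
    ring

lemma path_anti {t : ℝ} (ht : 0 ≤ t) : ∀ {k : ℕ}, (∀ j < k, 0 < pathSeq t j) →
    pathSeq t (k + 1) ≤ pathSeq t k
  | 0, _ => by rw [zero_add, path_zero, path_one]; linarith
  | k + 1, h => by
    rw [rec_path]
    have := mul_nonneg ht (h k (by omega)).le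
    linarith

lemma cyc_anti {t : ℝ} (ht : 0 ≤ t) : ∀ {k : ℕ}, (∀ j < k, 0 < cycSeq t j) →
    cycSeq t (k + 1) ≤ cycSeq t k
  | 0, _ => by simp [cycSeq]
  | k + 1, h => by
    rw [rec_cyc]
    have := mul_nonneg ht (h k (by omega)).le
    linarith

lemma path_det (t : ℝ) : ∀ k, pathSeq t (k + 1) ^ 2 - pathSeq t k * pathSeq t (k + 2) = t ^ (k + 2)
  | 0 => by rw [rec_path t 0, zero_add, path_zero, path_one]; ring
  | k + 1 => by
    have := path_det t k
    rw [pow_succ t (k + 2), ← this]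
    rw [rec_path t (k + 1), show k + 1 + 1 = k + 2 by ring, rec_path t k]
    ring

/-- The ratios `pathSeq (k + 1) / pathSeq k` decrease in `k`. -/
lemma path_ratio {t : ℝ} (ht : 0 ≤ t) (e : ℕ) : ∀ k, (∀ j ≤ e + k, 0 < pathSeq t j) →
    pathSeq t (e + k + 1) * pathSeq t e ≤ pathSeq t (e + 1) * pathSeq t (e + k)
  | 0, _ => by simp
  | k + 1, h => by
    have ih := path_ratio ht e k fun j hj => h j (by omega)
    have h0 := h (e + k) (by omega)
    have h1 := h (e + k + 1) (by omega)
    have he := h e (by omega)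
    have hd := path_det t (e + k)
    have ht2 : 0 ≤ t ^ (e + k + 2) := pow_nonneg ht _
    rw [show e + (k + 1) + 1 = e + k + 2 by ring, show e + (k + 1) = e + k + 1 by ring]
    refine le_of_mul_le_mul_right ?_ h0
    calc pathSeq t (e + k + 2) * pathSeq t e * pathSeq t (e + k)
        = (pathSeq t (e + k) * pathSeq t (e + k + 2)) * pathSeq t e := by ring
      _ ≤ (pathSeq t (e + k + 1) ^ 2) * pathSeq t e :=
          mul_le_mul_of_nonneg_right (by linarith) he.le
      _ = pathSeq t (e + k + 1) * (pathSeq t (e + k + 1) * pathSeq t e) := by ring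
      _ ≤ pathSeq t (e + k + 1) * (pathSeq t (e + 1) * pathSeq t (e + k)) :=
          mul_le_mul_of_nonneg_left ih h1.le
      _ = _ := by ring

/-- Positivity of `s` at the end of a range spreads to the whole range. -/
lemma pos_fill {t : ℝ} (ht : 0 ≤ t) {s : ℕ → ℝ} (hs : Rec t s) {a d : ℕ}
    (hp : ∀ j ≤ d, 0 < pathSeq t j) (ha : ∀ j ≤ a + 1, 0 < s j) (h : 0 < s (a + d + 2)) :
    ∀ j ≤ a + d + 2, 0 < s j := by
  intro j hj
  by_cases hja : j ≤ a + 1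
  · exact ha j hja
  obtain ⟨e, rfl⟩ : ∃ e, j = a + e + 2 := ⟨j - a - 2, by omega⟩
  obtain ⟨k, rfl⟩ : ∃ k, d = e + k := ⟨d - e, by omega⟩
  have hr := path_ratio ht e k hp
  have h1 := split_right hs a e
  have h2 := split_right hs a (e + k)
  have hpe := hp e (by omega)
  have hpd := hp (e + k) le_rfl
  have hsa := ha a (by omega)
  have key : pathSeq t e * s (a + (e + k) + 2) ≤ s (a + e + 2) * pathSeq t (e + k) := by
    rw [h1, h2]
    have := mul_le_mul_of_nonneg_left hr hsa.le
    linarith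
  have := lt_of_lt_of_le (mul_pos hpe h) key
  exact pos_of_mul_pos_left this hpd.le

lemma submul_aux {t : ℝ} {s : ℕ → ℝ} (hs : Rec t s) {a d : ℕ}
    (h1 : pathSeq t (a + 1) ≤ pathSeq t a) (h2 : s (d + 1) ≤ s d) :
    s (a + d + 2) ≤ pathSeq t (a + 1) * s (d + 1) := by
  rw [split_left hs d a]
  have := mul_nonneg (sub_nonneg.2 h1) (sub_nonneg.2 h2)
  linarith

lemma cyc_eq (t : ℝ) (k : ℕ) : cycSeq t (k + 2) = 2 * pathSeq t (k + 1) - pathSeq t k := by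
  have := split_right (rec_cyc t) 0 k
  rw [zero_add] at this
  rw [this]
  simp only [cycSeq]
  ring

lemma path_submul {t : ℝ} (ht : 0 ≤ t) {a d : ℕ} (ha : ∀ j ≤ a, 0 < pathSeq t j)
    (hd : ∀ j ≤ d, 0 < pathSeq t j) : pathSeq t (a + d) ≤ pathSeq t a * pathSeq t d := by
  rcases a with _ | a
  · simp [path_zero]
  rcases d with _ | d
  · simp [path_zero]
  rw [show a + 1 + (d + 1) = a + d + 2 by ring]
  exact submul_aux (rec_path t) (path_anti ht fun j hj => ha j (by omega))
    (path_anti ht fun j hj => hd j (by omega))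

lemma cyc_submul {t : ℝ} (ht : 0 ≤ t) {a d : ℕ} (ha : ∀ j ≤ a, 0 < pathSeq t j)
    (hd : ∀ j ≤ d + 1, 0 < cycSeq t j) :
    cycSeq t (a + (d + 1)) ≤ pathSeq t a * cycSeq t (d + 1) := by
  rcases a with _ | a
  · simp [path_zero]
  rw [show a + 1 + (d + 1) = a + d + 2 by ring]
  exact submul_aux (rec_cyc t) (path_anti ht fun j hj => ha j (by omega))
    (cyc_anti ht fun j hj => hd j (by omega))

lemma cyc_le_path {t : ℝ} (ht : 0 ≤ t) {k : ℕ} (h : ∀ j ≤ k, 0 < pathSeq t j) :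
    cycSeq t (k + 2) ≤ pathSeq t (k + 2) := by
  rw [cyc_eq, rec_path]
  have : pathSeq t (k + 1) ≤ (1 - t) * pathSeq t k := by
    rcases k with _ | k
    · simp [path_zero, path_one]
    · rw [rec_path]
      have := mul_le_mul_of_nonneg_left (path_anti ht (k := k) fun j hj => h j (by omega)) ht
      linarith
  linarith

/-! ### Log-submodularity and the join inequality -/

/-- All induced subgraphs of `G` have a positive independence polynomial at `-t`. -/
def PS {V : Type*} (G : SimpleGraph V) (t : ℝ) : Prop := ∀ S : Finset V, 0 < Z G t S

lemma PS.nn {V : Type*} {G : SimpleGraph V} {t : ℝ} (h : PS G t) : NN G t := fun S => (h S).le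

/-- Log-submodularity, by induction on the size of `A ∪ B`. -/
lemma Z_submod_aux {V : Type*} [DecidableEq V] {G : SimpleGraph V} {t : ℝ} (ht : 0 ≤ t)
    (h : PS G t) : ∀ (n : ℕ) (A B : Finset V), (A ∪ B).card ≤ n →
      Z G t (A ∪ B) * Z G t (A ∩ B) ≤ Z G t A * Z G t B := by
  intro n
  induction n with
  | zero =>
    intro A B hc
    have : A ∪ B = ∅ := Finset.card_eq_zero.1 (by omega)
    obtain ⟨rfl, rfl⟩ := Finset.union_eq_empty.1 this
    simp
  | succ n ih =>
    intro A B hc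
    by_cases hAB : A ⊆ B
    · rw [Finset.union_eq_right.2 hAB, Finset.inter_eq_left.2 hAB, mul_comm]
    obtain ⟨v, hvA, hvB⟩ := Finset.not_subset.1 hAB
    obtain ⟨A', hvA', rfl⟩ : ∃ A', v ∉ A' ∧ A = insert v A' :=
      ⟨A.erase v, Finset.notMem_erase _ _, (Finset.insert_erase hvA).symm⟩
    have hvU : v ∉ A' ∪ B := by simp [hvA', hvB]
    rw [Finset.insert_union, Finset.card_insert_of_notMem hvU] at hc
    have hc' : (A' ∪ B).card ≤ n := by omega
    rw [Finset.insert_union, Finset.insert_inter_of_notMem hvB]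
    have h1 := ih A' B hc'
    -- the ratio at `v` decreases when `A'` is enlarged to `A' ∪ B`
    have h2 : Z G t (insert v (A' ∪ B)) * Z G t A' ≤ Z G t (A' ∪ B) * Z G t (insert v A') := by
      rw [Z_insert G t hvU, Z_insert G t hvA']
      have hsub : A' ∪ dl G v (A' ∪ B) ⊆ A' ∪ B :=
        Finset.union_subset Finset.subset_union_left (dl_subset _ _ _)
      have h3 := ih A' (dl G v (A' ∪ B)) ((Finset.card_le_card hsub).trans hc')
      have h4 := Z_mono ht h.nn hsub
      have h5 : A' ∩ dl G v (A' ∪ B) = dl G v A' := by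
        ext w; simp only [Finset.mem_inter, mem_dl, Finset.mem_union]; tauto
      rw [h5] at h3
      have h6 := mul_le_mul_of_nonneg_right h4 (h (dl G v A')).le
      have h7 := mul_le_mul_of_nonneg_left (h6.trans h3) ht
      linarith
    have hA' := h A'
    refine le_of_mul_le_mul_right ?_ hA'
    have h8 := mul_le_mul_of_nonneg_right h2 (h (A' ∩ B)).le
    have h9 := mul_le_mul_of_nonneg_right h1 (h (insert v A')).le
    linarith

lemma Z_submod {V : Type*} [DecidableEq V] {G : SimpleGraph V} {t : ℝ} (ht : 0 ≤ t)
    (h : PS G t) (A B : Finset V) :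
    Z G t (A ∪ B) * Z G t (A ∩ B) ≤ Z G t A * Z G t B :=
  Z_submod_aux ht h _ A B le_rfl

/-- Passing from `C' ∪ D'` to `C ∪ D` decreases `Z` at least as much as passing from `C'` to `C` and
from `D'` to `D` separately. -/
lemma Z_split {V : Type*} [DecidableEq V] {G : SimpleGraph V} {t : ℝ} (ht : 0 ≤ t)
    (h : PS G t) {C D C' D' : Finset V} (hd : Disjoint C D) (hC : C' ⊆ C) (hD : D' ⊆ D) :
    Z G t (C ∪ D) * (Z G t C' * Z G t D') ≤ Z G t (C' ∪ D') * (Z G t C * Z G t D) := by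
  have hd' : ∀ x ∈ C, x ∉ D := fun x hx hy => Finset.disjoint_left.1 hd hx hy
  have h1 := Z_submod ht h C (C' ∪ D)
  have h2 := Z_submod ht h D (C' ∪ D')
  have e1 : C ∪ (C' ∪ D) = C ∪ D := by
    ext x; have := @hC x; simp only [Finset.mem_union]; tauto
  have e2 : C ∩ (C' ∪ D) = C' := by
    ext x; have := @hC x; have := hd' x; simp only [Finset.mem_union, Finset.mem_inter]; tauto
  have e3 : D ∪ (C' ∪ D') = C' ∪ D := by
    ext x; have := @hD x; simp only [Finset.mem_union]; tauto
  have e4 : D ∩ (C' ∪ D') = D' := by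
    ext x; have := @hC x; have := hd' x; have := @hD x
    simp only [Finset.mem_union, Finset.mem_inter]; tauto
  rw [e1, e2] at h1
  rw [e3, e4] at h2
  have h3 := mul_le_mul_of_nonneg_right h1 (h D').le
  have h4 := mul_le_mul_of_nonneg_left h2 (h C).le
  linarith

/-- Join inequality: two rooted pieces `(C, w)` and `(D, u)` connected by an edge `u w`. With
`q = Z(C ∪ D) / Z(C ∪ D - u)`, `y = Z(C) / Z(C - w)`, `x = Z(D) / Z(D - u)` it says
`q ≤ 1 - (1 - x) / y`. -/
lemma Z_join {V : Type*} [DecidableEq V] {G : SimpleGraph V} {t : ℝ} (ht : 0 ≤ t)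
    (h : PS G t) {C D : Finset V} {u w : V} (hd : Disjoint C D) (hu : u ∈ D)
    (huw : G.Adj u w) :
    Z G t (C ∪ D) * (Z G t C * Z G t (D.erase u)) ≤ Z G t ((C ∪ D).erase u) *
      (Z G t C * Z G t (D.erase u) - Z G t (C.erase w) * (Z G t (D.erase u) - Z G t D)) := by
  obtain ⟨E, huE, rfl⟩ : ∃ E, u ∉ E ∧ D = insert u E :=
    ⟨D.erase u, Finset.notMem_erase _ _, (Finset.insert_erase hu).symm⟩
  have huC : u ∉ C := fun hx => Finset.disjoint_left.1 hd hx (Finset.mem_insert_self _ _)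
  have huCE : u ∉ C ∪ E := by simp [huC, huE]
  rw [Finset.union_insert, Finset.erase_insert huE, Finset.erase_insert huCE, Z_insert G t huE]
  have h1 := Z_insert_le (S := C ∪ E) (T := C.erase w ∪ dl G u E) ht h.nn huCE (by
    intro x hx
    rw [mem_dl] at hx
    rw [Finset.mem_union, Finset.mem_erase, mem_dl]
    rcases Finset.mem_union.1 hx.1 with hx1 | hx1
    · exact Or.inl ⟨fun hxw => hx.2 (hxw ▸ huw), hx1⟩
    · exact Or.inr ⟨hx1, hx.2⟩)
  have h2 := Z_split ht h (hd.mono_right (Finset.subset_insert u E)) (Finset.erase_subset w C)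
    (dl_subset G u E)
  have h3 := mul_le_mul_of_nonneg_right h1 (mul_pos (h C) (h E)).le
  have h4 := mul_le_mul_of_nonneg_left h2 ht
  linarith

/-- Arithmetic of the join inequality: the bounds `ZC / ZCw ≤ α / α'` and `ZD / ZDu ≤ β / β'` for the
two pieces give a bound for the joined piece. -/
lemma join_num {ZS ZSu ZC ZCw ZD ZDu α α' β β' : ℝ} (hS : 0 < ZS) (hSu : 0 < ZSu) (hC : 0 < ZC)
    (hDu : 0 < ZDu) (hα : 0 < α) (hα' : 0 < α') (hβ' : 0 < β')
    (hβ : β ≤ β') (h1 : ZC * α' ≤ α * ZCw) (h2 : ZD * β' ≤ β * ZDu)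
    (hj : ZS * (ZC * ZDu) ≤ ZSu * (ZC * ZDu - ZCw * (ZDu - ZD))) :
    ZS * (α * β') ≤ ZSu * (α * β' - α' * (β' - β)) ∧ 0 < α * β' - α' * (β' - β) := by
  have hD : 0 ≤ ZDu * (β' - β) := mul_nonneg hDu.le (sub_nonneg.2 hβ)
  have k1 : ZDu * (β' - β) ≤ (ZDu - ZD) * β' := by linarith
  have k2 : (ZC * α') * (ZDu * (β' - β)) ≤ (α * ZCw) * ((ZDu - ZD) * β') :=
    mul_le_mul h1 k1 hD (le_trans (mul_pos hC hα').le h1)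
  have k3 := mul_le_mul_of_nonneg_right hj (mul_pos hα hβ').le
  have k4 := mul_le_mul_of_nonneg_left k2 hSu.le
  have k : ZS * (α * β') ≤ ZSu * (α * β' - α' * (β' - β)) := by
    refine le_of_mul_le_mul_right ?_ (mul_pos hC hDu)
    linarith
  exact ⟨k, pos_of_mul_pos_right (lt_of_lt_of_le (mul_pos hS (mul_pos hα hβ')) k) hSu.le⟩

/-! ### Rooted connected sets with and without a cycle -/

/-- `RT G S u`: the vertex set `S` with root `u ∈ S` is assembled from single vertices by joining
two rooted pieces along an edge between their roots (so `G` has a spanning tree on `S`). -/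
inductive RT {V : Type*} [DecidableEq V] (G : SimpleGraph V) : Finset V → V → Prop
  | single (u : V) : RT G {u} u
  | join {C D : Finset V} {u w : V} : RT G C w → RT G D u → Disjoint C D → G.Adj u w →
      RT G (C ∪ D) u

/-- `RC G S u`: like `RT`, but exactly one of the pieces closes a cycle. In the basic piece the
root `u` is adjacent to `a` and `b`, where `a` is the root of `D`, and `b`, `c` are possible roots
of `C` with `a` adjacent to `c`. -/
inductive RC {V : Type*} [DecidableEq V] (G : SimpleGraph V) : Finset V → V → Prop
  | base {C D : Finset V} {u a b c : V} : RT G C b → RT G C c → RT G D a → Disjoint C D →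
      u ∉ C ∪ D → G.Adj a c → G.Adj u a → G.Adj u b → RC G (insert u (C ∪ D)) u
  | joinL {C D : Finset V} {u w : V} : RC G C w → RT G D u → Disjoint C D → G.Adj u w →
      RC G (C ∪ D) u
  | joinR {C D : Finset V} {u w : V} : RT G C w → RC G D u → Disjoint C D → G.Adj u w →
      RC G (C ∪ D) u

section Rooted

variable {V : Type*} [DecidableEq V] {G : SimpleGraph V}

lemma RT.mem {S : Finset V} {u : V} (h : RT G S u) : u ∈ S := by
  induction h with
  | single u => simp
  | join _ _ _ _ _ ih => exact Finset.mem_union_right _ ih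

lemma RC.mem {S : Finset V} {u : V} (h : RC G S u) : u ∈ S := by
  induction h with
  | base => simp
  | joinL _ h2 _ _ _ => exact Finset.mem_union_right _ h2.mem
  | joinR _ _ _ _ ih => exact Finset.mem_union_right _ ih

lemma RT.grow {S : Finset V} {u v x : V} (h : RT G S u) (hv : v ∉ S) (hx : x ∈ S)
    (hvx : G.Adj v x) : RT G (insert v S) u := by
  induction h with
  | single u =>
    obtain rfl : x = u := by simpa using hx
    rw [Finset.insert_eq]
    exact RT.join (RT.single v) (RT.single x) (by simpa using hv) hvx.symm
  | @join C D u w h1 h2 hd huw ih1 ih2 =>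
    rw [Finset.mem_union, not_or] at hv
    rcases Finset.mem_union.1 hx with hx | hx
    · rw [← Finset.insert_union]
      exact RT.join (ih1 hv.1 hx) h2 (Finset.disjoint_insert_left.2 ⟨hv.2, hd⟩) huw
    · rw [← Finset.union_insert]
      exact RT.join h1 (ih2 hv.2 hx) (Finset.disjoint_insert_right.2 ⟨hv.1, hd⟩) huw

lemma RC.grow {S : Finset V} {u v x : V} (h : RC G S u) (hv : v ∉ S) (hx : x ∈ S)
    (hvx : G.Adj v x) : RC G (insert v S) u := by
  induction h with
  | @base C D u a b c h1 h2 h3 hd hu hac hua hub =>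
    rw [Finset.mem_insert, not_or, Finset.mem_union, not_or] at hv
    rcases Finset.mem_insert.1 hx with rfl | hx
    · rw [Finset.insert_eq v]
      refine RC.joinR (RT.single v) (RC.base h1 h2 h3 hd hu hac hua hub) ?_ hvx.symm
      rw [Finset.disjoint_singleton_left]
      simp [hv]
    · rw [Finset.insert_comm]
      rcases Finset.mem_union.1 hx with hx | hx
      · rw [← Finset.insert_union]
        refine RC.base (h1.grow hv.2.1 hx hvx) (h2.grow hv.2.1 hx hvx) h3
          (Finset.disjoint_insert_left.2 ⟨hv.2.2, hd⟩) ?_ hac hua hub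
        rw [Finset.insert_union, Finset.mem_insert, not_or]
        exact ⟨Ne.symm hv.1, hu⟩
      · rw [← Finset.union_insert]
        refine RC.base h1 h2 (h3.grow hv.2.2 hx hvx)
          (Finset.disjoint_insert_right.2 ⟨hv.2.1, hd⟩) ?_ hac hua hub
        rw [Finset.union_insert, Finset.mem_insert, not_or]
        exact ⟨Ne.symm hv.1, hu⟩
  | @joinL C D u w h1 h2 hd huw ih =>
    rw [Finset.mem_union, not_or] at hv
    rcases Finset.mem_union.1 hx with hx | hx
    · rw [← Finset.insert_union]
      exact RC.joinL (ih hv.1 hx) h2 (Finset.disjoint_insert_left.2 ⟨hv.2, hd⟩) huw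
    · rw [← Finset.union_insert]
      exact RC.joinL h1 (h2.grow hv.2 hx hvx) (Finset.disjoint_insert_right.2 ⟨hv.1, hd⟩) huw
  | @joinR C D u w h1 h2 hd huw ih =>
    rw [Finset.mem_union, not_or] at hv
    rcases Finset.mem_union.1 hx with hx | hx
    · rw [← Finset.insert_union]
      exact RC.joinR (h1.grow hv.1 hx hvx) h2 (Finset.disjoint_insert_left.2 ⟨hv.2, hd⟩) huw
    · rw [← Finset.union_insert]
      exact RC.joinR h1 (ih hv.2 hx) (Finset.disjoint_insert_right.2 ⟨hv.1, hd⟩) huw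

/-- Among rooted connected sets of given size, a path rooted at its end maximises
`Z(S) / Z(S - u)`. -/
lemma RT.bound {t : ℝ} (ht : 0 ≤ t) (h : PS G t) {S : Finset V} {u : V} (hS : RT G S u) :
    ∃ m, S.card = m + 1 ∧ (∀ j ≤ m + 1, 0 < pathSeq t j) ∧
      Z G t S * pathSeq t m ≤ pathSeq t (m + 1) * Z G t (S.erase u) := by
  induction hS with
  | single u =>
    have h1 := h {u}
    rw [Z_singleton] at h1
    refine ⟨0, by simp, ?_, ?_⟩
    · intro j hj
      interval_cases j
      · simp [path_zero]
      · simpa [path_one] using h1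
    · simp [Z_singleton, path_zero, path_one, Z_empty]
  | @join C D u w h1 h2 hd huw ih1 ih2 =>
    obtain ⟨a, hca, hpa, hba⟩ := ih1
    obtain ⟨d, hcd, hpd, hbd⟩ := ih2
    obtain ⟨k1, k2⟩ := join_num (h _) (h _) (h C) (h _) (hpa (a + 1) le_rfl) (hpa a (by omega))
      (hpd d (by omega)) (path_anti ht fun j hj => hpd j (by omega)) hba hbd
      (Z_join ht h hd h2.mem huw)
    rw [← split_left (rec_path t) d a] at k1 k2
    have hpos := pos_fill ht (rec_path t) (fun j hj => hpd j (by omega)) hpa k2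
    refine ⟨a + d + 1, ?_, hpos, ?_⟩
    · rw [Finset.card_union_of_disjoint hd, hca, hcd]; ring
    · have h3 := path_submul ht hpa (d := d) fun j hj => hpd j (by omega)
      rw [show a + 1 + d = a + d + 1 by ring] at h3
      have h4 := mul_le_mul_of_nonneg_left h3 (h (C ∪ D)).le
      linarith

/-- The basic piece of `RC`: the bound obtained from the cycle, in its sharp form. -/
lemma RC.base_bound {t : ℝ} (ht : 0 ≤ t) (h : PS G t) {C D : Finset V} {u a b c : V}
    (h1 : RT G C b) (h2 : RT G C c) (h3 : RT G D a) (hd : Disjoint C D) (hu : u ∉ C ∪ D)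
    (hac : G.Adj a c) (hua : G.Adj u a) (hub : G.Adj u b) :
    ∃ k, (C ∪ D).card = k + 2 ∧ (∀ j ≤ k + 2, 0 < pathSeq t j) ∧
      (∀ j ≤ k + 3, 0 < cycSeq t j) ∧
      Z G t (insert u (C ∪ D)) * pathSeq t (k + 2) ≤ cycSeq t (k + 3) * Z G t (C ∪ D) := by
  obtain ⟨m, hcm, hpm, hbm⟩ := h1.bound ht h
  obtain ⟨m', hcm', -, hbm'⟩ := h2.bound ht h
  obtain rfl : m' = m := by omega
  obtain ⟨d, hcd, hpd, hbd⟩ := h3.bound ht h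
  obtain ⟨k1, k2⟩ := join_num (h _) (h _) (h C) (h _) (hpm (m' + 1) le_rfl) (hpm m' (by omega))
    (hpd d (by omega)) (path_anti ht fun j hj => hpd j (by omega)) hbm' hbd
    (Z_join ht h hd h3.mem hac)
  rw [← split_left (rec_path t) d m'] at k1 k2
  have hpos := pos_fill ht (rec_path t) (fun j hj => hpd j (by omega)) hpm k2
  have hbC := h1.mem
  have haD := h3.mem
  have haC : a ∉ C := fun hx => Finset.disjoint_left.1 hd hx haD
  -- deleting `b` from `C ∪ D - a` costs at most as much as deleting it from `C`
  have hb : Z G t ((C ∪ D).erase a) * Z G t (C.erase b) ≤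
      Z G t (((C ∪ D).erase a).erase b) * Z G t C := by
    have e1 : (C ∪ D).erase a = C ∪ D.erase a := by
      rw [Finset.erase_union_distrib, Finset.erase_eq_of_notMem haC]
    have hbD : b ∉ D.erase a := fun hx =>
      Finset.disjoint_left.1 hd hbC (Finset.mem_of_mem_erase hx)
    have e2 : (C ∪ D.erase a).erase b = C.erase b ∪ D.erase a := by
      rw [Finset.erase_union_distrib, Finset.erase_eq_of_notMem hbD]
    rw [e1, e2]
    have := Z_split ht h (hd.mono_right (Finset.erase_subset a D)) (Finset.erase_subset b C)
      (le_refl (D.erase a))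
    refine le_of_mul_le_mul_right ?_ (h (D.erase a))
    linarith
  have hb' : Z G t ((C ∪ D).erase a) * pathSeq t m' ≤
      pathSeq t (m' + 1) * Z G t (((C ∪ D).erase a).erase b) := by
    refine le_of_mul_le_mul_right ?_ (h C)
    have i1 := mul_le_mul_of_nonneg_left hbm (h ((C ∪ D).erase a)).le
    have i2 := mul_le_mul_of_nonneg_left hb (hpm (m' + 1) le_rfl).le
    linarith
  have hT : Z G t (C ∪ D) * pathSeq t (m' + d) ≤
      pathSeq t (m' + d + 2) * Z G t (((C ∪ D).erase a).erase b) := by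
    refine le_of_mul_le_mul_right ?_ (hpm (m' + 1) le_rfl)
    have i0 := path_submul ht (a := m') (d := d) (fun j hj => hpm j (by omega))
      fun j hj => hpd j (by omega)
    have i1 := mul_le_mul_of_nonneg_left i0
      (mul_pos (h (C ∪ D)) (hpm (m' + 1) le_rfl)).le
    have i2 := mul_le_mul_of_nonneg_right k1 (hpm m' (by omega)).le
    have i3 := mul_le_mul_of_nonneg_left hb' k2.le
    linarith
  have hS := Z_insert_le (T := ((C ∪ D).erase a).erase b) ht h.nn hu (by
    intro x hx
    rw [mem_dl] at hx
    rw [Finset.mem_erase, Finset.mem_erase]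
    exact ⟨fun hxb => hx.2 (hxb ▸ hub), fun hxa => hx.2 (hxa ▸ hua), hx.1⟩)
  have hc3 : cycSeq t (m' + d + 3) = pathSeq t (m' + d + 2) - t * pathSeq t (m' + d) := by
    rw [cyc_eq t (m' + d + 1), rec_path t (m' + d)]
    ring
  have hfin : Z G t (insert u (C ∪ D)) * pathSeq t (m' + d + 2) ≤
      cycSeq t (m' + d + 3) * Z G t (C ∪ D) := by
    rw [hc3]
    have i1 := mul_le_mul_of_nonneg_right hS k2.le
    have i2 := mul_le_mul_of_nonneg_left hT ht
    linarith
  have hcpos : 0 < cycSeq t (m' + d + 3) :=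
    pos_of_mul_pos_left (lt_of_lt_of_le (mul_pos (h _) k2) hfin) (h (C ∪ D)).le
  refine ⟨m' + d, ?_, hpos, ?_, hfin⟩
  · rw [Finset.card_union_of_disjoint hd, hcm, hcd]; ring
  · have := pos_fill ht (rec_cyc t) (a := 0) (d := m' + d + 1) (fun j hj => hpos j (by omega))
      (by intro j hj; interval_cases j <;> simp [cycSeq])
      (by rw [show 0 + (m' + d + 1) + 2 = m' + d + 3 by ring]; exact hcpos)
    intro j hj
    exact this j (by omega)

/-- For a rooted set closing a cycle, `Z(S) / Z(S - u)` is at most the ratio of two consecutive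
terms of the cycle sequence. -/
lemma RC.bound {t : ℝ} (ht : 0 ≤ t) (h : PS G t) {S : Finset V} {u : V} (hS : RC G S u) :
    ∃ m, S.card = m + 3 ∧ (∀ j ≤ m + 3, 0 < cycSeq t j) ∧
      Z G t S * cycSeq t (m + 2) ≤ cycSeq t (m + 3) * Z G t (S.erase u) := by
  induction hS with
  | @base C D u a b c h1 h2 h3 hd hu hac hua hub =>
    obtain ⟨k, hk, hp, hc, hb⟩ := RC.base_bound ht h h1 h2 h3 hd hu hac hua hub
    refine ⟨k, ?_, hc, ?_⟩
    · rw [Finset.card_insert_of_notMem hu, hk]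
    · rw [Finset.erase_insert hu]
      have i1 := cyc_le_path ht (k := k) fun j hj => hp j (by omega)
      have i2 := mul_le_mul_of_nonneg_left i1 (h (insert u (C ∪ D))).le
      linarith
  | @joinL C D u w h1 h2 hd huw ih =>
    obtain ⟨a, hca, hpa, hba⟩ := ih
    obtain ⟨d, hcd, hpd, hbd⟩ := h2.bound ht h
    obtain ⟨k1, k2⟩ := join_num (h _) (h _) (h C) (h _) (hpa (a + 3) le_rfl) (hpa (a + 2) (by omega))
      (hpd d (by omega)) (path_anti ht fun j hj => hpd j (by omega)) hba hbd
      (Z_join ht h hd h2.mem huw)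
    have e : cycSeq t (a + 3) * pathSeq t d - cycSeq t (a + 2) * (pathSeq t d - pathSeq t (d + 1))
        = cycSeq t (a + 2 + d + 2) := by
      rw [split_right (rec_cyc t) (a + 2) d]; ring
    rw [e] at k1 k2
    have hpos := pos_fill ht (rec_cyc t) (fun j hj => hpd j (by omega)) hpa k2
    refine ⟨a + d + 1, ?_, fun j hj => hpos j (by omega), ?_⟩
    · rw [Finset.card_union_of_disjoint hd, hca, hcd]; ring
    · have h3 := cyc_submul ht (a := d) (d := a + 2) (fun j hj => hpd j (by omega)) hpa
      have h4 := mul_le_mul_of_nonneg_left h3 (h (C ∪ D)).le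
      rw [show a + d + 1 + 2 = d + (a + 2 + 1) by ring, show a + d + 1 + 3 = a + 2 + d + 2 by ring]
      rw [show a + 2 + 1 = a + 3 by ring] at h4 ⊢
      linarith
  | @joinR C D u w h1 h2 hd huw ih =>
    obtain ⟨d, hcd, hpd, hbd⟩ := ih
    obtain ⟨a, hca, hpa, hba⟩ := h1.bound ht h
    obtain ⟨k1, k2⟩ := join_num (h _) (h _) (h C) (h _) (hpa (a + 1) le_rfl) (hpa a (by omega))
      (hpd (d + 2) (by omega)) (cyc_anti ht fun j hj => hpd j (by omega)) hba hbd
      (Z_join ht h hd h2.mem huw)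
    rw [show d + 3 = (d + 2) + 1 by ring, ← split_left (rec_cyc t) (d + 2) a] at k1 k2
    have hpos := pos_fill ht (rec_cyc t) (a := d + 1) (d := a + 1) hpa
      (fun j hj => hpd j (by omega))
      (by rw [show d + 1 + (a + 1) + 2 = a + (d + 2) + 2 by ring]; exact k2)
    refine ⟨a + d + 1, ?_, fun j hj => hpos j (by omega), ?_⟩
    · rw [Finset.card_union_of_disjoint hd, hca, hcd]; ring
    · have h3 := cyc_submul ht (a := a + 1) (d := d + 1) hpa (fun j hj => hpd j (by omega))
      have h4 := mul_le_mul_of_nonneg_left h3 (h (C ∪ D)).le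
      rw [show a + d + 1 + 2 = a + 1 + (d + 1 + 1) by ring,
        show a + d + 1 + 3 = a + (d + 2) + 2 by ring]
      rw [show d + 1 + 1 = d + 2 by ring] at h4 ⊢
      linarith

end Rooted

/-! ### Connected graphs with a cycle: the cycle is extremal -/

section Grow

variable {V : Type*} [DecidableEq V] {G : SimpleGraph V}

/-- A property of vertex sets that survives adding an adjacent vertex reaches the whole vertex
set of a connected graph. -/
lemma grow_univ [Fintype V] (hG : G.Connected) (P : Finset V → Prop) {S₀ : Finset V}
    (hne : S₀.Nonempty) (h0 : P S₀)
    (hstep : ∀ S v x, P S → v ∉ S → x ∈ S → G.Adj v x → P (insert v S)) : P Finset.univ := by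
  have key : ∀ k (S : Finset V), S.Nonempty → P S → (Finset.univ \ S).card = k →
      P Finset.univ := by
    intro k
    induction k with
    | zero =>
      intro S _ hP hc
      have : S = Finset.univ := by
        rw [Finset.card_eq_zero, Finset.sdiff_eq_empty_iff_subset] at hc
        exact Finset.univ_subset_iff.1 hc
      exact this ▸ hP
    | succ k ih =>
      intro S hS hP hc
      obtain ⟨y, hy⟩ := hS
      obtain ⟨z, hz⟩ : (Finset.univ \ S).Nonempty := Finset.card_pos.1 (by omega)
      obtain ⟨p⟩ := hG.preconnected y z
      obtain ⟨d, -, hd1, hd2⟩ := p.exists_boundary_dart (S : Set V) (by simpa using hy)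
        (by simpa using hz)
      refine ih (insert d.snd S) ⟨_, Finset.mem_insert_self _ _⟩
        (hstep S d.snd d.fst hP (by simpa using hd2) (by simpa using hd1) d.adj.symm) ?_
      rw [Finset.sdiff_insert, Finset.card_erase_of_mem (by simpa using hd2), hc]
      rfl
  exact key _ S₀ hne h0 rfl

lemma RT.of_path {u v : V} (p : G.Walk u v) (hp : p.IsPath) : RT G p.support.toFinset u := by
  induction p with
  | nil => simpa using RT.single _
  | cons h p ih =>
    rw [Walk.cons_isPath_iff] at hp
    rw [Walk.support_cons, List.toFinset_cons, Finset.insert_eq, Finset.union_comm]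
    exact RT.join (ih hp.1) (RT.single _) (by simpa using hp.2) h

lemma RT.of_path_end {u v : V} (p : G.Walk u v) (hp : p.IsPath) : RT G p.support.toFinset v := by
  have := RT.of_path p.reverse hp.reverse
  rwa [Walk.support_reverse, List.toFinset_reverse] at this

lemma Z_path_le {t : ℝ} (ht : 0 ≤ t) (h : PS G t) {u v : V} (p : G.Walk u v) (hp : p.IsPath) :
    Z G t p.support.toFinset ≤ pathSeq t p.support.toFinset.card := by
  induction p with
  | nil => simp [Z_singleton, path_one]
  | @cons u w v hadj p ih =>
    obtain ⟨m, hc, hpos, hb⟩ := (RT.of_path _ hp).bound ht h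
    rw [Walk.cons_isPath_iff] at hp
    have hu : u ∉ p.support.toFinset := by simpa using hp.2
    rw [Walk.support_cons, List.toFinset_cons] at hc hb ⊢
    rw [Finset.erase_insert hu] at hb
    have ih := ih hp.1
    rw [hc]
    rw [Finset.card_insert_of_notMem hu] at hc
    rw [show p.support.toFinset.card = m by omega] at ih
    refine le_of_mul_le_mul_right (hb.trans ?_) (hpos m (by omega))
    exact mul_le_mul_of_nonneg_left ih (hpos (m + 1) le_rfl).le

lemma RC.of_cycle {u : V} (c : G.Walk u u) (hc : c.IsCycle) :
    RC G c.support.toFinset u ∧ ∀ t : ℝ, 0 ≤ t → PS G t →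
      Z G t c.support.toFinset ≤ cycSeq t c.support.toFinset.card := by
  cases c with
  | nil => exact absurd hc Walk.not_isCycle_nil
  | @cons _ a _ hua q =>
    have hl := hc.three_le_length
    rw [Walk.cons_isCycle_iff] at hc
    obtain ⟨hq, -⟩ := hc
    cases q with
    | nil => simp at hl
    | @cons _ c' _ hac p' =>
      rw [Walk.cons_isPath_iff] at hq
      obtain ⟨hp', hap'⟩ := hq
      have hr' : p'.reverse.IsPath := hp'.reverse
      have hsupp : p'.support.toFinset = p'.reverse.support.toFinset := by
        rw [Walk.support_reverse, List.toFinset_reverse]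
      have hl' : p'.reverse.length = p'.length := Walk.length_reverse _
      have hmem : ∀ x, x ∈ p'.support ↔ x ∈ p'.reverse.support := by simp
      simp only [Walk.support_cons, List.toFinset_cons, hsupp]
      rw [hmem] at hap'
      clear hsupp hmem hp'
      generalize p'.reverse = r' at *
      cases r' with
      | nil => simp at hl' hl; omega
      | @cons _ b _ hub r =>
        rw [Walk.cons_isPath_iff] at hr'
        rw [Walk.support_cons, List.mem_cons, not_or] at hap'
        have hd : Disjoint r.support.toFinset {a} := by simpa using hap'.2
        have hu : u ∉ r.support.toFinset ∪ {a} := by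
          simp only [Finset.mem_union, List.mem_toFinset, Finset.mem_singleton, not_or]
          exact ⟨hr'.2, hua.ne⟩
        have hset : insert u (insert a (List.toFinset (u :: r.support))) =
            insert u (r.support.toFinset ∪ {a}) := by
          ext x; simp; tauto
        rw [Walk.support_cons, hset]
        have h1 := RT.of_path r hr'.1
        have h2 := RT.of_path_end r hr'.1
        refine ⟨RC.base h1 h2 (RT.single a) hd hu hac hua hub, fun t ht h => ?_⟩
        obtain ⟨k, hk, hp, hcy, hb⟩ := RC.base_bound ht h h1 h2 (RT.single a) hd hu hac hua hub
        have hpath : (Walk.cons hac r.reverse).IsPath := by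
          rw [Walk.cons_isPath_iff]
          exact ⟨hr'.1.reverse, by simpa using hap'.2⟩
        have hz := Z_path_le ht h _ hpath
        rw [Walk.support_cons, List.toFinset_cons, Walk.support_reverse, List.toFinset_reverse,
          Finset.insert_eq, Finset.union_comm, hk] at hz
        rw [Finset.card_insert_of_notMem hu, hk]
        refine le_of_mul_le_mul_right (hb.trans ?_) (hp (k + 2) le_rfl)
        exact mul_le_mul_of_nonneg_left hz (hcy (k + 3) le_rfl).le

/-- A connected graph with a cycle has independence polynomial at most that of the cycle of the
same order, as long as all its induced subgraphs are positive: starting from a cycle and adding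
one adjacent vertex at a time, `RC.bound` compares the successive ratios. -/
lemma Z_le_cyc [Fintype V] (hG : G.Connected) (hcyc : ¬ G.IsAcyclic) {t : ℝ} (ht : 0 ≤ t)
    (h : PS G t) : Z G t Finset.univ ≤ cycSeq t (Fintype.card V) := by
  unfold IsAcyclic at hcyc
  push Not at hcyc
  obtain ⟨u, c, hc⟩ := hcyc
  suffices hs : Z G t Finset.univ ≤ cycSeq t (Finset.univ : Finset V).card ∧
      ∀ x ∈ (Finset.univ : Finset V), RC G Finset.univ x from hs.1
  refine grow_univ hG
    (fun S => Z G t S ≤ cycSeq t S.card ∧ ∀ x ∈ S, RC G S x)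
    (S₀ := c.support.toFinset) ⟨u, by simp⟩ ⟨(RC.of_cycle c hc).2 t ht h, ?_⟩ ?_
  · intro x hx
    have hx' : x ∈ c.support := by simpa using hx
    have := (RC.of_cycle (c.rotate x hx') (hc.rotate hx')).1
    have e : (c.rotate x hx').support.toFinset = c.support.toFinset := by
      ext y; simp
    rwa [e] at this
  · rintro S v x ⟨hZ, hR⟩ hv hx hvx
    have hnew : RC G (insert v S) v := by
      have := RC.joinL (hR x hx) (RT.single v) (by simpa using hv) hvx
      rwa [Finset.union_comm, ← Finset.insert_eq] at this
    refine ⟨?_, ?_⟩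
    · obtain ⟨m, hm, hp, hb⟩ := hnew.bound ht h
      rw [Finset.erase_insert hv] at hb
      rw [hm]
      rw [Finset.card_insert_of_notMem hv] at hm
      rw [show S.card = m + 2 by omega] at hZ
      refine le_of_mul_le_mul_right (hb.trans ?_) (hp (m + 2) (by omega))
      exact mul_le_mul_of_nonneg_left hZ (hp (m + 3) le_rfl).le
    · intro y hy
      rcases Finset.mem_insert.1 hy with rfl | hy
      · exact hnew
      · exact (hR y hy).grow hv hx hvx

end Grow

lemma Unicyclic.not_isAcyclic {V : Type*} [Fintype V] {G : SimpleGraph V} (hG : Unicyclic G) :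
    ¬ G.IsAcyclic := by
  classical
  intro ha
  have h1 : G.IsTree := ⟨hG.1, ha⟩
  have h2 := h1.card_edgeFinset
  have h3 := hG.2
  rw [← coe_edgeFinset, Set.ncard_coe_finset] at h3
  omega

/-! ### Unicyclic graphs: the triangle with pendant vertices is extremal -/

/-- Vertex sets obtained from a single vertex by adding vertices with exactly one neighbour
among the previous ones: they induce trees. -/
inductive TS {V : Type*} [DecidableEq V] (G : SimpleGraph V) : Finset V → Prop
  | single (u : V) : TS G {u}
  | pend {S : Finset V} {v w : V} : TS G S → v ∉ S → w ∈ S → G.Adj v w →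
      (∀ x ∈ S, G.Adj v x → x = w) → TS G (insert v S)

/-- Vertex sets obtained like `TS`, except that exactly once a vertex with two previous
neighbours is added: they induce unicyclic graphs. -/
inductive US {V : Type*} [DecidableEq V] (G : SimpleGraph V) : Finset V → Prop
  | close {S : Finset V} {v a b : V} : TS G S → v ∉ S → a ∈ S → b ∈ S → a ≠ b → G.Adj v a →
      G.Adj v b → (∀ x ∈ S, G.Adj v x → x = a ∨ x = b) → US G (insert v S)
  | pend {S : Finset V} {v w : V} : US G S → v ∉ S → w ∈ S → G.Adj v w →
      (∀ x ∈ S, G.Adj v x → x = w) → US G (insert v S)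

open Classical in
/-- The number of neighbours of `v` in `S`. -/
noncomputable def nb {V : Type*} (G : SimpleGraph V) (v : V) (S : Finset V) : ℕ :=
  (S.filter (G.Adj v)).card

/-- Twice the number of edges of `G` inside `S`. -/
noncomputable def dsum {V : Type*} (G : SimpleGraph V) (S : Finset V) : ℕ := ∑ u ∈ S, nb G u S

lemma dsum_univ {V : Type*} [Fintype V] {G : SimpleGraph V} :
    dsum G Finset.univ = 2 * G.edgeSet.ncard := by
  classical
  rw [← coe_edgeFinset, Set.ncard_coe_finset, ← G.sum_degrees_eq_twice_card_edges]
  unfold dsum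
  refine Finset.sum_congr rfl fun u _ => ?_
  unfold nb
  rw [← G.card_neighborFinset_eq_degree, G.neighborFinset_eq_filter]

lemma NN.le_one {V : Type*} {G : SimpleGraph V} [Nonempty V] {t : ℝ} (h : NN G t) : t ≤ 1 := by
  obtain ⟨v⟩ := ‹Nonempty V›
  have := h {v}
  rw [Z_singleton] at this
  linarith

section Build

variable {V : Type*} [DecidableEq V] {G : SimpleGraph V}

lemma nb_insert {u v : V} {S : Finset V} (hv : v ∉ S) :
    (G.Adj u v → nb G u (insert v S) = nb G u S + 1) ∧
    (¬ G.Adj u v → nb G u (insert v S) = nb G u S) := by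
  classical
  unfold nb
  rw [Finset.filter_insert]
  constructor
  · intro h
    rw [if_pos h, Finset.card_insert_of_notMem (by simp [hv])]
  · intro h
    rw [if_neg h]

lemma dsum_insert {v : V} {S : Finset V} (hv : v ∉ S) :
    dsum G (insert v S) = dsum G S + 2 * nb G v S := by
  classical
  unfold dsum
  rw [Finset.sum_insert hv, (nb_insert hv).2 (G.loopless.irrefl v)]
  have : ∑ u ∈ S, nb G u (insert v S) = ∑ u ∈ S, (nb G u S + if G.Adj v u then 1 else 0) := by
    refine Finset.sum_congr rfl fun u _ => ?_
    split_ifs with h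
    · exact (nb_insert hv).1 h.symm
    · simpa using (nb_insert hv).2 fun h' => h h'.symm
  rw [this, Finset.sum_add_distrib, ← Finset.card_filter]
  have h2 : (S.filter fun u => G.Adj v u).card = nb G v S := by
    unfold nb; congr
  rw [h2]
  ring

/-- Growing a unicyclic graph vertex by vertex through connected sets, the edge count leaves room
for exactly one vertex with two earlier neighbours. -/
lemma US.of_unicyclic [Fintype V] (hG : Unicyclic G) : US G Finset.univ := by
  classical
  obtain ⟨u⟩ := hG.1.nonempty
  have key := grow_univ hG.1 (fun S => (TS G S ∧ dsum G S + 2 = 2 * S.card) ∨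
      (US G S ∧ dsum G S = 2 * S.card) ∨ 2 * S.card + 2 ≤ dsum G S)
    (S₀ := {u}) (by simp) (Or.inl ⟨TS.single u, by simp [dsum, nb, Finset.filter_singleton]⟩) ?_
  · have h1 := dsum_univ (G := G)
    rw [hG.2, ← Finset.card_univ] at h1
    rcases key with h | h | h
    · omega
    · exact h.1
    · omega
  · intro S v x hP hv hx hvx
    have h1 := dsum_insert (G := G) hv
    have h2 := Finset.card_insert_of_notMem hv
    have hpos : 0 < nb G v S := by
      unfold nb
      exact Finset.card_pos.2 ⟨x, by simp [hx, hvx]⟩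
    have hone : nb G v S = 1 → ∃ w ∈ S, G.Adj v w ∧ ∀ y ∈ S, G.Adj v y → y = w := by
      intro h
      unfold nb at h
      obtain ⟨w, hw⟩ := Finset.card_eq_one.1 h
      have hmem : ∀ y, (y ∈ S ∧ G.Adj v y) ↔ y = w := fun y => by
        rw [← Finset.mem_filter, hw, Finset.mem_singleton]
      exact ⟨w, ((hmem w).2 rfl).1, ((hmem w).2 rfl).2, fun y hy hvy => (hmem y).1 ⟨hy, hvy⟩⟩
    rcases hP with ⟨hT, hd⟩ | ⟨hU, hd⟩ | hd
    · rcases (show nb G v S = 1 ∨ nb G v S = 2 ∨ 3 ≤ nb G v S by omega) with h | h | h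
      · obtain ⟨w, hw, hvw, huniq⟩ := hone h
        exact Or.inl ⟨TS.pend hT hv hw hvw huniq, by omega⟩
      · have h' := h
        unfold nb at h'
        obtain ⟨a, b, hab, hw⟩ := Finset.card_eq_two.1 h'
        have hmem : ∀ y, (y ∈ S ∧ G.Adj v y) ↔ y = a ∨ y = b := fun y => by
          rw [← Finset.mem_filter, hw, Finset.mem_insert, Finset.mem_singleton]
        have ha := (hmem a).2 (Or.inl rfl)
        have hb := (hmem b).2 (Or.inr rfl)
        exact Or.inr (Or.inl ⟨US.close hT hv ha.1 hb.1 hab ha.2 hb.2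
          fun y hy hvy => (hmem y).1 ⟨hy, hvy⟩, by omega⟩)
      · exact Or.inr (Or.inr (by omega))
    · rcases (show nb G v S = 1 ∨ 2 ≤ nb G v S by omega) with h | h
      · obtain ⟨w, hw, hvw, huniq⟩ := hone h
        exact Or.inr (Or.inl ⟨US.pend hU hv hw hvw huniq, by omega⟩)
      · exact Or.inr (Or.inr (by omega))
    · exact Or.inr (Or.inr (by omega))

lemma TS.exists_adj {S : Finset V} (h : TS G S) (h2 : 2 ≤ S.card) :
    ∃ a ∈ S, ∃ b ∈ S, G.Adj a b := by
  cases h with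
  | single u => simp at h2
  | @pend S v w _ _ hw hvw _ => exact ⟨v, by simp, w, by simp [hw], hvw⟩

lemma US.exists_adj {S : Finset V} (h : US G S) (w : V) :
    ∃ a ∈ S.erase w, ∃ b ∈ S.erase w, G.Adj a b := by
  induction h with
  | @close S v a b hT hv ha hb hab hva hvb _ =>
    by_cases hw : w = v
    · subst hw
      rw [Finset.erase_insert hv]
      exact hT.exists_adj (Finset.one_lt_card.2 ⟨a, ha, b, hb, hab⟩)
    · by_cases hwa : w = a
      · subst hwa
        exact ⟨v, by simp [Ne.symm hw], b, by simp [hb, Ne.symm hab], hvb⟩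
      · exact ⟨v, by simp [Ne.symm hw], a, by simp [ha, Ne.symm hwa], hva⟩
  | @pend S v x _ _ _ _ _ ih =>
    obtain ⟨a, ha, b, hb, h⟩ := ih
    have hs : S.erase w ⊆ (insert v S).erase w := Finset.erase_subset_erase _ (by simp)
    exact ⟨a, hs ha, b, hs hb, h⟩

lemma Z_le_pow_card {t : ℝ} (ht : 0 ≤ t) (h : NN G t) (h1 : t ≤ 1) (S : Finset V) :
    Z G t S ≤ (1 - t) ^ S.card := by
  simpa [Z_empty] using Z_le_pow ht h h1 ∅ S (by simp)

/-- Among trees, the star has the smallest polynomial at `-t`. -/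
lemma TS.le_Z {t : ℝ} (ht : 0 ≤ t) (h : NN G t) (h1 : t ≤ 1) {S : Finset V} (hS : TS G S) :
    ∃ m, S.card = m + 1 ∧ (1 - t) ^ m - t ≤ Z G t S := by
  induction hS with
  | single u => exact ⟨0, by simp, by simp [Z_singleton]⟩
  | @pend S v w _ hv hw hvw huniq ih =>
    obtain ⟨m, hm, hb⟩ := ih
    refine ⟨m + 1, by rw [Finset.card_insert_of_notMem hv, hm], ?_⟩
    have h2 : Z G t (dl G v S) ≤ (1 - t) ^ m := by
      have e : dl G v S = S.erase w := by
        ext y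
        rw [mem_dl, Finset.mem_erase]
        exact ⟨fun hy => ⟨fun e => hy.2 (e ▸ hvw), hy.1⟩,
          fun hy => ⟨hy.2, fun hvy => hy.1 (huniq y hy.2 hvy)⟩⟩
      have := Z_le_pow_card ht h h1 (S.erase w)
      rwa [Finset.card_erase_of_mem hw, hm, ← e] at this
    rw [Z_insert _ _ hv]
    have := mul_le_mul_of_nonneg_left h2 ht
    rw [pow_succ]
    linarith

/-- The left-hand side is the polynomial of `U_(m+3)` at `-t`. -/
lemma US.le_Z {t : ℝ} (ht : 0 ≤ t) (h : NN G t) (h1 : t ≤ 1) {S : Finset V} (hS : US G S) :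
    ∃ m, S.card = m + 3 ∧ (1 - 2 * t) * (1 - t) ^ m - t ≤ Z G t S := by
  induction hS with
  | @close S v a b hT hv ha hb hab hva hvb huniq =>
    obtain ⟨m, hm, hbd⟩ := hT.le_Z ht h h1
    have h2 : 1 < S.card := Finset.one_lt_card.2 ⟨a, ha, b, hb, hab⟩
    obtain ⟨k, rfl⟩ : ∃ k, m = k + 1 := ⟨m - 1, by omega⟩
    refine ⟨k, by rw [Finset.card_insert_of_notMem hv, hm], ?_⟩
    have h2 : Z G t (dl G v S) ≤ (1 - t) ^ k := by
      have e : dl G v S = (S.erase a).erase b := by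
        ext y
        rw [mem_dl, Finset.mem_erase, Finset.mem_erase]
        exact ⟨fun hy => ⟨fun e => hy.2 (e ▸ hvb), fun e => hy.2 (e ▸ hva), hy.1⟩,
          fun hy => ⟨hy.2.2, fun hvy => (huniq y hy.2.2 hvy).elim hy.2.1 hy.1⟩⟩
      have := Z_le_pow_card ht h h1 ((S.erase a).erase b)
      rwa [Finset.card_erase_of_mem (Finset.mem_erase.2 ⟨hab.symm, hb⟩),
        Finset.card_erase_of_mem ha, hm, ← e] at this
    rw [Z_insert _ _ hv]
    have := mul_le_mul_of_nonneg_left h2 ht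
    rw [pow_succ] at hbd
    linarith
  | @pend S v w hU hv hw hvw huniq ih =>
    obtain ⟨m, hm, hb⟩ := ih
    refine ⟨m + 1, by rw [Finset.card_insert_of_notMem hv, hm], ?_⟩
    have h2 : Z G t (dl G v S) ≤ (1 - 2 * t) * (1 - t) ^ m := by
      have e : dl G v S = S.erase w := by
        ext y
        rw [mem_dl, Finset.mem_erase]
        exact ⟨fun hy => ⟨fun e => hy.2 (e ▸ hvw), hy.1⟩,
          fun hy => ⟨hy.2, fun hvy => hy.1 (huniq y hy.2 hvy)⟩⟩
      obtain ⟨a, ha, b, hb', hab⟩ := hU.exists_adj w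
      have hpair : Z G t {a, b} = 1 - 2 * t := by
        rw [Z_insert _ _ (by simpa using hab.ne), Z_singleton]
        have : dl G a {b} = ∅ := by
          ext y
          simp only [mem_dl, Finset.mem_singleton, Finset.notMem_empty, iff_false, not_and,
            not_not]
          rintro rfl
          exact hab
        rw [this, Z_empty]
        ring
      have hsub : ({a, b} : Finset V) ⊆ S.erase w := by
        intro y hy
        rcases Finset.mem_insert.1 hy with rfl | hy
        · exact ha
        · exact Finset.mem_singleton.1 hy ▸ hb'
      have := Z_le_pow ht h h1 {a, b} (S.erase w \ {a, b}) Finset.disjoint_sdiff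
      rw [Finset.union_sdiff_of_subset hsub, Finset.card_sdiff_of_subset hsub,
        Finset.card_pair hab.ne, Finset.card_erase_of_mem hw, hm, hpair, ← e] at this
      exact this
    rw [Z_insert _ _ hv]
    have := mul_le_mul_of_nonneg_left h2 ht
    rw [pow_succ]
    linarith

lemma Unicyclic.le_Z [Fintype V] (hG : Unicyclic G) {n : ℕ} (hn : Fintype.card V = n + 3)
    {t : ℝ} (ht : 0 ≤ t) (h : NN G t) :
    (1 - 2 * t) * (1 - t) ^ n - t ≤ Z G t Finset.univ := by
  have := hG.1.nonempty
  obtain ⟨m, hm, hb⟩ := (US.of_unicyclic hG).le_Z ht h h.le_one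
  rw [Finset.card_univ, hn] at hm
  obtain rfl : m = n := by omega
  exact hb

lemma indep_insert_of_unique {A S : Finset V} {v w : V} (hA : IsIndepFinset G A)
    (hAS : A ⊆ S) (hwA : w ∉ A) (huniq : ∀ x ∈ S, G.Adj v x → x = w) :
    IsIndepFinset G (insert v A) :=
  isIndepFinset_insert.2 ⟨hA, fun x hx hvx => hwA (huniq x (hAS hx) hvx ▸ hx)⟩

lemma TS.bipartite {S : Finset V} (hS : TS G S) : ∃ A B : Finset V, IsIndepFinset G A ∧
    IsIndepFinset G B ∧ Disjoint A B ∧ A ∪ B = S := by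
  induction hS with
  | single u =>
    refine ⟨{u}, ∅, ?_, ?_, by simp, by simp⟩
    · simp [IsIndepFinset]
    · simp [IsIndepFinset]
  | @pend S v w _ hv hw hvw huniq ih =>
    obtain ⟨A, B, hA, hB, hd, rfl⟩ := ih
    have hvA : v ∉ A := fun h => hv (Finset.mem_union_left _ h)
    have hvB : v ∉ B := fun h => hv (Finset.mem_union_right _ h)
    by_cases hwA : w ∈ A
    · refine ⟨A, insert v B, hA, indep_insert_of_unique hB Finset.subset_union_right
        (fun h => Finset.disjoint_left.1 hd hwA h) huniq, ?_, by rw [Finset.union_insert]⟩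
      rw [Finset.disjoint_insert_right]
      exact ⟨hvA, hd⟩
    · refine ⟨insert v A, B, indep_insert_of_unique hA Finset.subset_union_left hwA huniq, hB, ?_,
        by rw [Finset.insert_union]⟩
      rw [Finset.disjoint_insert_left]
      exact ⟨hvB, hd⟩

/-- Deleting one vertex from a unicyclic graph can leave a bipartite graph. -/
lemma US.near_bipartite {S : Finset V} (hS : US G S) : ∃ A B : Finset V, IsIndepFinset G A ∧
    IsIndepFinset G B ∧ Disjoint A B ∧ A ∪ B ⊆ S ∧ S.card ≤ A.card + B.card + 1 := by
  induction hS with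
  | @close S v a b hT hv _ _ _ _ _ _ =>
    obtain ⟨A, B, hA, hB, hd, rfl⟩ := hT.bipartite
    refine ⟨A, B, hA, hB, hd, Finset.subset_insert _ _, ?_⟩
    rw [Finset.card_insert_of_notMem hv, Finset.card_union_of_disjoint hd]
  | @pend S v w _ hv hw hvw huniq ih =>
    obtain ⟨A, B, hA, hB, hd, hS, hc⟩ := ih
    have hvA : v ∉ A := fun h => hv (hS (Finset.mem_union_left _ h))
    have hvB : v ∉ B := fun h => hv (hS (Finset.mem_union_right _ h))
    by_cases hwA : w ∈ A
    · refine ⟨A, insert v B, hA, indep_insert_of_unique hB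
        (Finset.subset_union_right.trans hS)
        (fun h => Finset.disjoint_left.1 hd hwA h) huniq, ?_, ?_, ?_⟩
      · rw [Finset.disjoint_insert_right]
        exact ⟨hvA, hd⟩
      · rw [Finset.union_insert]
        exact Finset.insert_subset_insert _ hS
      · rw [Finset.card_insert_of_notMem hv, Finset.card_insert_of_notMem hvB]
        omega
    · refine ⟨insert v A, B, indep_insert_of_unique hA
        (Finset.subset_union_left.trans hS) hwA huniq, hB, ?_, ?_, ?_⟩
      · rw [Finset.disjoint_insert_left]
        exact ⟨hvB, hd⟩
      · rw [Finset.insert_union]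
        exact Finset.insert_subset_insert _ hS
      · rw [Finset.card_insert_of_notMem hv, Finset.card_insert_of_notMem hvA]
        omega

lemma Unicyclic.exists_indep [Fintype V] (hG : Unicyclic G) {n : ℕ}
    (hn : Fintype.card V = 2 * n) : ∃ A : Finset V, IsIndepFinset G A ∧ n ≤ A.card := by
  obtain ⟨A, B, hA, hB, -, -, hc⟩ := (US.of_unicyclic hG).near_bipartite
  rw [Finset.card_univ, hn] at hc
  rcases le_or_gt n A.card with h | h
  · exact ⟨A, hA, h⟩
  · exact ⟨B, hB, by omega⟩

end Build

/-! ### Cycles, triangles with pendant vertices, and coronas -/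

lemma Z_indep {V : Type*} {G : SimpleGraph V} (t : ℝ) {S : Finset V} (hS : IsIndepFinset G S) :
    Z G t S = (1 - t) ^ S.card := by
  classical
  induction S using Finset.induction_on with
  | empty => simp [Z_empty]
  | insert a S ha ih =>
    rw [isIndepFinset_insert] at hS
    have e : dl G a S = S := by
      ext y
      rw [mem_dl]
      exact ⟨fun h => h.1, fun h => ⟨h, hS.2 y h⟩⟩
    rw [Z_insert _ _ ha, e, ih hS.1, Finset.card_insert_of_notMem ha, pow_succ]
    ring

lemma cycle_adj_iff {m : ℕ} (u v : Fin (m + 3)) : (cycleGraph (m + 3)).Adj u v ↔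
    u.val = v.val + 1 ∨ v.val = u.val + 1 ∨ (u.val = 0 ∧ v.val = m + 2) ∨
      (v.val = 0 ∧ u.val = m + 2) := by
  rw [cycleGraph_adj']
  have hu := u.isLt
  have hv := v.isLt
  rcases lt_trichotomy u v with h | h | h
  · rw [Fin.coe_sub_iff_lt.2 h, Fin.sub_val_of_le h.le]
    have : u.val < v.val := h
    omega
  · subst h
    have h0 : (u - u).val = 0 := by rw [sub_self]; rfl
    omega
  · rw [Fin.coe_sub_iff_lt.2 h, Fin.sub_val_of_le h.le]
    have : v.val < u.val := h
    omega

/-- The vertices `a, …, a + k - 1` of the cycle. -/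
def arc (n a k : ℕ) : Finset (Fin n) := Finset.univ.filter fun i => a ≤ i.val ∧ i.val < a + k

lemma mem_arc {n a k : ℕ} {i : Fin n} : i ∈ arc n a k ↔ a ≤ i.val ∧ i.val < a + k := by
  simp [arc]

lemma Z_arc {m : ℕ} (t : ℝ) (a : ℕ) : ∀ k, a + k ≤ m + 3 → (1 ≤ a ∨ a + k ≤ m + 2) →
    Z (cycleGraph (m + 3)) t (arc (m + 3) a k) = pathSeq t k
  | 0, _, _ => by
    have : arc (m + 3) a 0 = ∅ := by
      ext i; simp [mem_arc]
    rw [this, Z_empty, path_zero]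
  | 1, h1, _ => by
    have : arc (m + 3) a 1 = {⟨a, by omega⟩} := by
      ext i; simp [mem_arc, Fin.ext_iff]; omega
    rw [this, Z_singleton, path_one]
  | k + 2, h1, h2 => by
    have hi : arc (m + 3) a (k + 2) = insert ⟨a + k + 1, by omega⟩ (arc (m + 3) a (k + 1)) := by
      ext i; simp [mem_arc, Fin.ext_iff]; omega
    have hd : dl (cycleGraph (m + 3)) ⟨a + k + 1, by omega⟩ (arc (m + 3) a (k + 1)) =
        arc (m + 3) a k := by
      ext i
      rw [mem_dl, cycle_adj_iff, mem_arc, mem_arc]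
      simp only
      omega
    rw [hi, Z_insert _ _ (by simp [mem_arc]; omega), hd, Z_arc t a (k + 1) (by omega) (by omega),
      Z_arc t a k (by omega) (by omega), rec_path t k]

lemma Z_cycle (m : ℕ) (t : ℝ) :
    Z (cycleGraph (m + 3)) t Finset.univ = cycSeq t (m + 3) := by
  have hi : (Finset.univ : Finset (Fin (m + 3))) =
      insert ⟨m + 2, by omega⟩ (arc (m + 3) 0 (m + 2)) := by
    ext i
    have := i.isLt
    simp [mem_arc, Fin.ext_iff]
    omega
  have hd : dl (cycleGraph (m + 3)) ⟨m + 2, by omega⟩ (arc (m + 3) 0 (m + 2)) =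
      arc (m + 3) 1 m := by
    ext i
    rw [mem_dl, cycle_adj_iff, mem_arc, mem_arc]
    simp only [and_true]
    omega
  rw [hi, Z_insert _ _ (by simp [mem_arc]), hd, Z_arc t 0 (m + 2) (by omega) (by omega),
    Z_arc t 1 m (by omega) (by omega), cyc_eq t (m + 1), rec_path t m]
  ring

lemma Ugraph_adj {n : ℕ} (i j : Fin n) : (Ugraph n).Adj i j ↔ i.val ≠ j.val ∧
    (i.val = 0 ∨ (i.val = 1 ∧ j.val = 2) ∨ j.val = 0 ∨ (j.val = 1 ∧ i.val = 2)) := by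
  simp only [Ugraph, SimpleGraph.fromRel_adj, ne_eq, Fin.ext_iff]
  tauto

lemma Z_Ugraph (m : ℕ) (t : ℝ) :
    Z (Ugraph (m + 3)) t Finset.univ = (1 - 2 * t) * (1 - t) ^ m - t := by
  have hc : ∀ a k, a + k = m + 3 → (arc (m + 3) a k).card = k := by
    intro a k h
    have : (arc (m + 3) a k).map Fin.valEmbedding = Finset.Ico a (a + k) := by
      ext x
      simp only [Finset.mem_map, mem_arc, Fin.valEmbedding_apply, Finset.mem_Ico]
      exact ⟨fun ⟨i, hi, e⟩ => e ▸ hi, fun hx => ⟨⟨x, by omega⟩, hx, rfl⟩⟩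
    rw [← Finset.card_map Fin.valEmbedding, this, Nat.card_Ico]
    omega
  have hind : ∀ k, IsIndepFinset (Ugraph (m + 3)) (arc (m + 3) 2 k) ∧
      IsIndepFinset (Ugraph (m + 3)) (arc (m + 3) 3 k) := by
    intro k
    constructor <;>
    · intro i hi j hj
      rw [mem_arc] at hi hj
      rw [Ugraph_adj]
      omega
  have h0 : (Finset.univ : Finset (Fin (m + 3))) = insert ⟨0, by omega⟩ (arc (m + 3) 1 (m + 2)) := by
    ext i
    have := i.isLt
    simp only [mem_arc, Fin.ext_iff, Finset.mem_insert, Finset.mem_univ, true_iff]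
    omega
  have h1 : arc (m + 3) 1 (m + 2) = insert ⟨1, by omega⟩ (arc (m + 3) 2 (m + 1)) := by
    ext i
    simp only [mem_arc, Fin.ext_iff, Finset.mem_insert]
    omega
  have hd0 : dl (Ugraph (m + 3)) ⟨0, by omega⟩ (arc (m + 3) 1 (m + 2)) = ∅ := by
    ext i
    rw [mem_dl, Ugraph_adj, mem_arc]
    simp
    omega
  have hd1 : dl (Ugraph (m + 3)) ⟨1, by omega⟩ (arc (m + 3) 2 (m + 1)) = arc (m + 3) 3 m := by
    ext i
    rw [mem_dl, Ugraph_adj, mem_arc, mem_arc]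
    simp only [true_and]
    omega
  rw [h0, Z_insert _ _ (by simp [mem_arc]), hd0, Z_empty, h1, Z_insert _ _ (by simp [mem_arc]), hd1,
    Z_indep t (hind _).1, Z_indep t (hind _).2, hc 2 _ (by omega), hc 3 _ (by omega), pow_succ]
  ring

section Corona

variable {W : Type*} {H : SimpleGraph W}

lemma corona_adj_inl (v : W) (a : W ⊕ W) : (corona H).Adj (Sum.inl v) a ↔
    (∃ w, a = Sum.inl w ∧ H.Adj v w) ∨ a = Sum.inr v := by
  cases a with
  | inl w =>
    simp only [corona, SimpleGraph.fromRel_adj, Sum.inl.injEq, exists_eq_left', reduceCtorEq,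
      or_false, ne_eq]
    constructor
    · rintro ⟨-, h | h⟩
      · exact h
      · exact h.symm
    · exact fun h => ⟨h.ne, Or.inl h⟩
  | inr w => simp [corona, eq_comm]

lemma corona_adj_inr (v w : W) : ¬ (corona H).Adj (Sum.inr v) (Sum.inr w) := by
  simp [corona]

variable [DecidableEq W]

/-- Each independent set `A` of `H` extends to the pendant vertices outside `A`, which turns
evaluation at `-s` into evaluation at `-s / (1 - s)`. -/
lemma Z_corona {s : ℝ} (hs : 1 - s ≠ 0) (S : Finset W) : ∀ T, S ⊆ T →
    Z (corona H) s (S.disjSum T) = (1 - s) ^ T.card * Z H (s / (1 - s)) S := by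
  induction S using Finset.strongInduction with
  | H S ih =>
    intro T hST
    rcases S.eq_empty_or_nonempty with rfl | ⟨v, hv⟩
    · rw [Z_empty, mul_one, Z_indep, Finset.card_disjSum]
      · simp
      · intro a ha b hb
        rw [Finset.empty_disjSum, Finset.mem_map] at ha hb
        obtain ⟨a, -, rfl⟩ := ha
        obtain ⟨b, -, rfl⟩ := hb
        exact corona_adj_inr a b
    · have e1 : S.disjSum T = insert (Sum.inl v) ((S.erase v).disjSum T) := by
        ext (a | a)
        · simp only [Finset.inl_mem_disjSum, Finset.mem_insert, Sum.inl.injEq, Finset.mem_erase]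
          by_cases h : a = v
          · simp [h, hv]
          · simp [h]
        · simp
      have e2 : dl (corona H) (Sum.inl v) ((S.erase v).disjSum T) =
          (dl H v (S.erase v)).disjSum (T.erase v) := by
        ext (a | a)
        · simp [mem_dl, corona_adj_inl]
        · simp [mem_dl, corona_adj_inl, and_comm]
      have hlt : S.erase v ⊂ S := Finset.erase_ssubset hv
      have hTv := Finset.card_erase_add_one (hST hv)
      have hsub : S.erase v ⊆ T.erase v := Finset.erase_subset_erase v hST
      rw [e1, Z_insert _ _ (by simp), e2, ih _ hlt T (hlt.subset.trans hST),
        ih _ (lt_of_le_of_lt (dl_subset H v _) hlt) _ ((dl_subset H v _).trans hsub)]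
      nth_rewrite 3 [← Finset.insert_erase hv]
      rw [Z_insert _ _ (Finset.notMem_erase v S), ← hTv, pow_succ]
      field_simp

variable [Fintype W]

lemma eval_corona {x : ℝ} (hx : 1 + x ≠ 0) : (indepPoly (corona H)).eval x =
    (1 + x) ^ Fintype.card W * Z H (-x / (1 + x)) Finset.univ := by
  rw [eval_indepPoly, ← Finset.univ_disjSum_univ, Z_corona (by simpa using hx) _ _ (le_refl _)]
  simp

lemma corona_half [Nonempty W] {x : ℝ} (hx : xi (corona H) ≤ x) (hx0 : x ≤ 0) : 0 < 1 + x := by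
  obtain ⟨v⟩ := ‹Nonempty W›
  have h := NN_of_xi_le hx hx0 {Sum.inl v, Sum.inr v}
  have e : dl (corona H) (Sum.inl v) {Sum.inr v} = ∅ := by
    ext a
    rw [mem_dl, Finset.mem_singleton, corona_adj_inl]
    simp only [Finset.notMem_empty, iff_false]
    tauto
  rw [Z_insert _ _ (by simp), e, Z_singleton, Z_empty] at h
  linarith

lemma corona_nn [Nonempty W] {x : ℝ} (hx : xi (corona H) ≤ x) (hx0 : x ≤ 0) :
    NN H (-x / (1 + x)) := by
  intro S
  have hp := corona_half hx hx0
  have h := NN_of_xi_le hx hx0 (S.disjSum Finset.univ)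
  rw [Z_corona (by rw [sub_neg_eq_add]; exact hp.ne') _ _ (Finset.subset_univ S),
    sub_neg_eq_add] at h
  exact nonneg_of_mul_nonneg_right h (pow_pos hp _)

lemma corona_ps [Nonempty W] {x : ℝ} (hx : xi (corona H) < x) (hx0 : x ≤ 0) :
    PS H (-x / (1 + x)) := by
  intro S
  have hp := corona_half hx.le hx0
  have h := Z_pos_of_xi_lt hx hx0 (S.disjSum Finset.univ)
  rw [Z_corona (by rw [sub_neg_eq_add]; exact hp.ne') _ _ (Finset.subset_univ S),
    sub_neg_eq_add] at h
  exact pos_of_mul_pos_right h (pow_pos hp _).le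

lemma corona_lower {n : ℕ} (hn : 3 ≤ n) (hc : Fintype.card W = n) (hH : Unicyclic H) :
    Pre (corona (cycleGraph n)) (corona H) := by
  obtain ⟨m, rfl⟩ : ∃ m, n = m + 3 := ⟨n - 3, by omega⟩
  have := hH.1.nonempty
  have hneg : xi (corona H) < 0 := root_neg (eval_xi _)
  have hcl : closure (Set.Ioc (xi (corona H)) 0) ⊆
      {x | (indepPoly (corona H)).eval x ≤ (indepPoly (corona (cycleGraph (m + 3)))).eval x} := by
    refine closure_minimal ?_ (isClosed_le (Polynomial.continuous _) (Polynomial.continuous _))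
    rintro x ⟨hx, hx0⟩
    have hp := corona_half hx.le hx0
    rw [Set.mem_ofPred_eq]
    rw [eval_corona hp.ne', eval_corona hp.ne', Z_cycle, Fintype.card_fin, hc]
    refine mul_le_mul_of_nonneg_left ?_ (pow_pos hp _).le
    rw [← hc]
    exact Z_le_cyc hH.1 hH.not_isAcyclic (div_nonneg (by linarith) hp.le) (corona_ps hx hx0)
  intro x hx
  rw [closure_Ioc hneg.ne] at hcl
  exact hcl hx

lemma corona_upper {n : ℕ} (hn : 3 ≤ n) (hc : Fintype.card W = n) (hH : Unicyclic H) :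
    Pre (corona H) (corona (Ugraph n)) := by
  obtain ⟨m, rfl⟩ : ∃ m, n = m + 3 := ⟨n - 3, by omega⟩
  have := hH.1.nonempty
  have key : ∀ x, xi (corona H) ≤ x → x ≤ 0 →
      (indepPoly (corona (Ugraph (m + 3)))).eval x ≤ (indepPoly (corona H)).eval x := by
    intro x hx hx0
    have hp := corona_half hx hx0
    rw [eval_corona hp.ne', eval_corona hp.ne', Z_Ugraph, Fintype.card_fin, hc]
    exact mul_le_mul_of_nonneg_left
      (hH.le_Z hc (div_nonneg (by linarith) hp.le) (corona_nn hx hx0)) (pow_pos hp _).le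
  -- at the largest root of `corona H` the polynomial of `corona U_n` is nonpositive
  have hle : xi (corona H) ≤ xi (corona (Ugraph (m + 3))) := by
    have h1 := key _ le_rfl (xi_nonpos _)
    rw [eval_xi] at h1
    have h2 : (indepPoly (corona (Ugraph (m + 3)))).eval 0 = 1 := by
      rw [eval_indepPoly, neg_zero, Z_zero]
    obtain ⟨r, hr, hr0⟩ := intermediate_value_Icc (xi_nonpos (corona H))
      (indepPoly (corona (Ugraph (m + 3)))).continuous.continuousOn
      (show (0 : ℝ) ∈ Set.Icc _ _ from ⟨h1, by rw [h2]; norm_num⟩)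
    exact hr.1.trans (le_xi hr0)
  exact fun x hx => key x (hle.trans hx.1) hx.2

end Corona

/-! ### Well-covered graphs and perfect matchings -/

/-- `J` is a maximal independent set. -/
def MaxInd {V : Type*} (G : SimpleGraph V) (J : Finset V) : Prop :=
  IsIndepFinset G J ∧ ∀ v ∉ J, ∃ u ∈ J, G.Adj u v

lemma WellCovered.card_eq {V : Type*} {G : SimpleGraph V} (h : WellCovered G) {J K : Finset V}
    (hJ : MaxInd G J) (hK : MaxInd G K) : J.card = K.card := by
  classical
  refine h J K hJ.1 ?_ hK.1 ?_
  · intro v hv hi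
    obtain ⟨u, hu, huv⟩ := hJ.2 v hv
    exact (isIndepFinset_insert.1 hi).2 u hu huv.symm
  · intro v hv hi
    obtain ⟨u, hu, huv⟩ := hK.2 v hv
    exact (isIndepFinset_insert.1 hi).2 u hu huv.symm

lemma exists_maxInd {V : Type*} [Fintype V] {G : SimpleGraph V} {I : Finset V}
    (hI : IsIndepFinset G I) : ∃ J, I ⊆ J ∧ MaxInd G J := by
  classical
  obtain ⟨J, hIJ, hJ⟩ := Finite.exists_le_maximal (p := IsIndepFinset G) hI
  refine ⟨J, hIJ, hJ.prop, fun v hv => ?_⟩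
  by_contra! hcon
  have : IsIndepFinset G (insert v J) :=
    isIndepFinset_insert.2 ⟨hJ.prop, fun w hw h => hcon w hw h.symm⟩
  exact hv (hJ.le_of_ge this (Finset.subset_insert v J) (Finset.mem_insert_self v J))

section Matching

variable {V : Type*} [Fintype V] {G : SimpleGraph V}

open Classical in
/-- The set of neighbours of the members of `X`. -/
noncomputable def nbhd (G : SimpleGraph V) (X : Finset V) : Finset V :=
  Finset.univ.filter fun w => ∃ x ∈ X, G.Adj x w

lemma mem_nbhd {X : Finset V} {w : V} : w ∈ nbhd G X ↔ ∃ x ∈ X, G.Adj x w := by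
  classical
  simp [nbhd]

/-- Hall's condition for independent sets of a well-covered graph without isolated vertices. -/
lemma WellCovered.card_le_nbhd (h : WellCovered G) (hiso : ∀ v, ∃ w, G.Adj v w) (X : Finset V)
    (hX : IsIndepFinset G X) : X.card ≤ (nbhd G X).card := by
  classical
  induction X using Finset.strongInduction with
  | H X ih =>
    rcases X.eq_empty_or_nonempty with rfl | ⟨x, hx⟩
    · simp
    obtain ⟨y, hxy⟩ := hiso x
    obtain ⟨J, hyJ, hJ⟩ := exists_maxInd (G := G) (I := {y}) (by simp [IsIndepFinset])
    have hyJ : y ∈ J := hyJ (Finset.mem_singleton_self y)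
    have hxJ : x ∉ J := fun hxJ => hJ.1 x hxJ y hyJ hxy
    have hss : X ∩ J ⊂ X := by
      refine Finset.ssubset_iff_subset_ne.2 ⟨Finset.inter_subset_left, fun e => hxJ ?_⟩
      have hx' : x ∈ X ∩ J := by rw [e]; exact hx
      exact (Finset.mem_inter.1 hx').2
    have h1 := ih _ hss (isIndepFinset_mono Finset.inter_subset_left hX)
    -- exchange: replace the neighbours of `X` in `J` by the members of `X` outside `J`
    have h2 : (X \ J).card ≤ (nbhd G X ∩ J).card := by
      have hind : IsIndepFinset G ((J \ nbhd G X) ∪ (X \ J)) := by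
        intro a ha b hb hab
        rw [Finset.mem_union, Finset.mem_sdiff, Finset.mem_sdiff] at ha hb
        rcases ha with ha | ha <;> rcases hb with hb | hb
        · exact hJ.1 a ha.1 b hb.1 hab
        · exact ha.2 (mem_nbhd.2 ⟨b, hb.1, hab.symm⟩)
        · exact hb.2 (mem_nbhd.2 ⟨a, ha.1, hab⟩)
        · exact hX a ha.1 b hb.1 hab
      obtain ⟨K, hK, hKm⟩ := exists_maxInd hind
      have h3 := Finset.card_le_card hK
      rw [h.card_eq hKm hJ, Finset.card_union_of_disjoint] at h3
      · have h4 := Finset.card_sdiff_add_card_inter J (nbhd G X)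
        rw [Finset.inter_comm] at h4
        omega
      · rw [Finset.disjoint_left]
        intro a ha hb
        exact (Finset.mem_sdiff.1 hb).2 (Finset.mem_sdiff.1 ha).1
    have h3 : (nbhd G (X ∩ J)).card ≤ (nbhd G X \ J).card := by
      refine Finset.card_le_card fun a ha => ?_
      obtain ⟨b, hb, hba⟩ := mem_nbhd.1 ha
      rw [Finset.mem_inter] at hb
      exact Finset.mem_sdiff.2 ⟨mem_nbhd.2 ⟨b, hb.1, hba⟩, fun haJ => hJ.1 b hb.2 a haJ hba⟩
    have h4 := Finset.card_sdiff_add_card_inter X J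
    have h5 := Finset.card_sdiff_add_card_inter (nbhd G X) J
    omega

/-- A fixed-point free involution along edges (a perfect matching) such that every maximal
independent set meets every matching edge. -/
structure PM (G : SimpleGraph V) (μ : V → V) : Prop where
  invol : ∀ v, μ (μ v) = v
  adj : ∀ v, G.Adj v (μ v)
  cover : ∀ J, MaxInd G J → ∀ v, v ∈ J ∨ μ v ∈ J

/-- An independent set of half the vertices is matched into its complement by Hall's theorem. All
maximal independent sets then have half the vertices, so each meets every matching edge. -/
lemma WellCovered.exists_PM (h : WellCovered G) (hiso : ∀ v, ∃ w, G.Adj v w) {n : ℕ}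
    (hc : Fintype.card V = 2 * n) {A : Finset V} (hA : IsIndepFinset G A) (hAn : n ≤ A.card) :
    ∃ μ, PM G μ := by
  classical
  have hle : ∀ I : Finset V, IsIndepFinset G I → I.card ≤ n := by
    intro I hI
    have h1 := h.card_le_nbhd hiso I hI
    have hd : Disjoint I (nbhd G I) := by
      rw [Finset.disjoint_left]
      intro a ha hb
      obtain ⟨b, hb, hba⟩ := mem_nbhd.1 hb
      exact hI b hb a ha hba
    have h2 := Finset.card_le_univ (I ∪ nbhd G I)
    rw [Finset.card_union_of_disjoint hd, hc] at h2
    omega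
  have hAn' : A.card = n := le_antisymm (hle A hA) hAn
  obtain ⟨f, hf, hfa⟩ := (Finset.all_card_le_biUnion_card_iff_exists_injective
    (fun a : A => nbhd G {a.val})).1 (by
      intro s
      have hs : IsIndepFinset G (s.map (Function.Embedding.subtype _)) :=
        isIndepFinset_mono (fun a ha => by
          obtain ⟨b, -, rfl⟩ := Finset.mem_map.1 ha
          exact b.2) hA
      have h1 := h.card_le_nbhd hiso _ hs
      rw [Finset.card_map] at h1
      refine h1.trans (Finset.card_le_card fun w hw => ?_)
      obtain ⟨x, hx, hxw⟩ := mem_nbhd.1 hw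
      obtain ⟨b, hb, rfl⟩ := Finset.mem_map.1 hx
      exact Finset.mem_biUnion.2 ⟨b, hb, mem_nbhd.2 ⟨_, Finset.mem_singleton_self _, hxw⟩⟩)
  have hfadj : ∀ a : A, G.Adj a.val (f a) := fun a => by
    obtain ⟨x, hx, hxw⟩ := mem_nbhd.1 (hfa a)
    rwa [Finset.mem_singleton.1 hx] at hxw
  have hfA : ∀ a, f a ∉ A := fun a ha => hA _ a.2 _ ha (hfadj a)
  have himg : Finset.univ.image f = Aᶜ := by
    refine Finset.eq_of_subset_of_card_le (fun x hx => ?_) ?_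
    · obtain ⟨a, -, rfl⟩ := Finset.mem_image.1 hx
      exact Finset.mem_compl.2 (hfA a)
    · rw [Finset.card_image_of_injective _ hf, Finset.card_compl, Finset.card_univ,
        Fintype.card_coe]
      omega
  have hsurj : ∀ v, v ∉ A → ∃ a, f a = v := fun v hv => by
    have : v ∈ Finset.univ.image f := himg ▸ Finset.mem_compl.2 hv
    simpa using this
  choose g hg using hsurj
  set μ : V → V := fun v => if hv : v ∈ A then f ⟨v, hv⟩ else (g v hv).val with hμ
  have hμA : ∀ a : A, μ a.val = f a := fun a => by simp [hμ]
  have hμf : ∀ a : A, μ (f a) = a.val := fun a => by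
    simp only [hμ, hfA a, dite_false]
    exact congrArg _ (hf (hg _ (hfA a)))
  have hcases : ∀ v, (∃ a : A, v = a.val) ∨ ∃ a : A, v = f a := fun v => by
    by_cases hv : v ∈ A
    · exact Or.inl ⟨⟨v, hv⟩, rfl⟩
    · exact Or.inr ⟨_, (hg v hv).symm⟩
  have hinv : ∀ v, μ (μ v) = v := by
    intro v
    rcases hcases v with ⟨a, rfl⟩ | ⟨a, rfl⟩
    · rw [hμA, hμf]
    · rw [hμf, hμA]
  have hadj : ∀ v, G.Adj v (μ v) := by
    intro v
    rcases hcases v with ⟨a, rfl⟩ | ⟨a, rfl⟩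
    · rw [hμA]; exact hfadj a
    · rw [hμf]; exact (hfadj a).symm
  refine ⟨μ, hinv, hadj, fun J hJ v => ?_⟩
  have hJn : J.card = n := by
    obtain ⟨K, hAK, hK⟩ := exists_maxInd hA
    have h1 := Finset.card_le_card hAK
    have h2 := hle K hK.1
    rw [h.card_eq hJ hK]
    omega
  have hd : Disjoint J (J.image μ) := by
    rw [Finset.disjoint_left]
    intro a ha hb
    obtain ⟨b, hbJ, rfl⟩ := Finset.mem_image.1 hb
    exact hJ.1 b hbJ _ ha (hadj b)
  have huniv : J ∪ J.image μ = Finset.univ := by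
    refine Finset.eq_univ_of_card _ ?_
    rw [Finset.card_union_of_disjoint hd,
      Finset.card_image_of_injective _ (Function.Involutive.injective hinv), hJn, hc]
    ring
  have hv : v ∈ J ∪ J.image μ := huniv ▸ Finset.mem_univ v
  rcases Finset.mem_union.1 hv with hv | hv
  · exact Or.inl hv
  · obtain ⟨b, hb, rfl⟩ := Finset.mem_image.1 hv
    exact Or.inr (by rwa [hinv])

/-- Neighbours of the two ends of a matching edge are adjacent, for otherwise a maximal
independent set containing both would miss that edge. -/
lemma PM.adj_of_adj {μ : V → V} (h : PM G μ) {v w z : V} (hw : G.Adj v w)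
    (hz : G.Adj (μ v) z) : G.Adj w z := by
  classical
  by_contra hcon
  have hI : IsIndepFinset G {w, z} := by
    rw [isIndepFinset_insert]
    exact ⟨by simp [IsIndepFinset], by simpa using hcon⟩
  obtain ⟨J, hIJ, hJ⟩ := exists_maxInd hI
  have hwJ : w ∈ J := hIJ (by simp)
  have hzJ : z ∈ J := hIJ (by simp)
  rcases h.cover J hJ v with h1 | h1
  · exact hJ.1 _ h1 _ hwJ hw
  · exact hJ.1 _ h1 _ hzJ hz

end Matching

/-! ### Graphs in which every matching edge is pendant -/

lemma connected_of_reachable {V : Type*} {G G' : SimpleGraph V} (hG : G.Connected)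
    (h : ∀ u v, G.Adj u v → G'.Reachable u v) : G'.Connected := by
  have := hG.nonempty
  refine SimpleGraph.Connected.mk fun u v => ?_
  obtain ⟨p⟩ := hG.preconnected u v
  induction p with
  | nil => exact Reachable.refl _
  | cons hadj _ ih => exact (h _ _ hadj).trans ih

/-- In a connected graph, a nonempty set closed under taking neighbours is everything. -/
lemma mem_of_closed {V : Type*} {G : SimpleGraph V} (hG : G.Connected) (s : Set V) {u : V}
    (hu : u ∈ s) (hs : ∀ a ∈ s, ∀ b, G.Adj a b → b ∈ s) (v : V) : v ∈ s := by
  by_contra hv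
  obtain ⟨p⟩ := hG.preconnected u v
  obtain ⟨d, -, h1, h2⟩ := p.exists_boundary_dart s hu hv
  exact h2 (hs _ h1 _ d.adj)

lemma indepPoly_iso {V W : Type*} [Fintype V] [Fintype W] {G : SimpleGraph V} {H : SimpleGraph W}
    (e : H ≃g G) : indepPoly H = indepPoly G := by
  classical
  unfold indepPoly
  refine Fintype.sum_equiv e.toEquiv.finsetCongr _ _ fun s => ?_
  have h1 : (e.toEquiv.finsetCongr s).card = s.card := by simp
  have h2 : IsIndepFinset G (e.toEquiv.finsetCongr s) ↔ IsIndepFinset H s := by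
    simp only [IsIndepFinset, Equiv.finsetCongr_apply, Finset.mem_map_equiv]
    constructor
    · intro h u hu v hv huv
      have hs : ∀ a, e.toEquiv.symm (e a) = a := e.toEquiv.symm_apply_apply
      exact h (e u) (by rwa [hs]) (e v) (by rwa [hs]) (e.map_rel_iff.2 huv)
    · intro h u hu v hv huv
      exact h _ hu _ hv (e.symm.map_rel_iff.2 huv)
  rw [h1]
  simp only [h2]

lemma ncard_edgeSet_iso {V W : Type*} {G : SimpleGraph V} {H : SimpleGraph W}
    (e : H ≃g G) : H.edgeSet.ncard = G.edgeSet.ncard :=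
  Nat.card_congr e.mapEdgeSet

lemma ncard_edgeSet_corona {W : Type*} [Fintype W] (H : SimpleGraph W) :
    (corona H).edgeSet.ncard = H.edgeSet.ncard + Fintype.card W := by
  classical
  have hset : (corona H).edgeSet = Set.image (Sym2.map Sum.inl) H.edgeSet ∪
      Set.range fun v : W => s(Sum.inl v, Sum.inr v) := by
    ext e
    induction e using Sym2.ind with
    | _ a b =>
      rw [SimpleGraph.mem_edgeSet]
      constructor
      · intro h
        cases a with
        | inl a =>
          rcases (corona_adj_inl a b).1 h with ⟨w, rfl, hw⟩ | rfl
          · exact Or.inl ⟨s(a, w), hw, by simp⟩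
          · exact Or.inr ⟨a, rfl⟩
        | inr a =>
          cases b with
          | inl b =>
            rcases (corona_adj_inl b _).1 h.symm with ⟨w, hw, -⟩ | hb
            · simp at hw
            · obtain rfl : a = b := by simpa using hb
              exact Or.inr ⟨a, Sym2.eq_swap⟩
          | inr b => exact absurd h (corona_adj_inr a b)
      · rintro (⟨e, he, hab⟩ | ⟨v, hv⟩)
        · induction e using Sym2.ind with
          | _ c d =>
            rw [Sym2.map_mk, ← SimpleGraph.mem_edgeSet] at *
            rw [← hab]
            exact (corona_adj_inl c _).2 (Or.inl ⟨d, rfl, he⟩)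
        · rw [← SimpleGraph.mem_edgeSet, ← hv]
          exact (corona_adj_inl (H := H) v (Sum.inr v)).2 (Or.inr rfl)
  have hinj : Function.Injective fun v : W => (s(Sum.inl v, Sum.inr v) : Sym2 (W ⊕ W)) := by
    intro a b h
    simpa using h
  rw [hset, Set.ncard_union_eq, Set.ncard_image_of_injective _ (Sym2.map.injective Sum.inl_injective),
    ← Set.image_univ, Set.ncard_image_of_injective _ hinj, Set.ncard_univ, Nat.card_eq_fintype_card]
  rw [Set.disjoint_left]
  rintro e ⟨e', -, rfl⟩ ⟨v, hv⟩
  have : (Sum.inr v : W ⊕ W) ∈ Sym2.map Sum.inl e' := by rw [← hv]; simp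
  simp at this

/-- If every edge of a perfect matching `μ` has an end of degree one, the graph is the corona of
the unicyclic graph induced on the other ends. -/
lemma exists_corona.{u} {V : Type u} [Fintype V] {G : SimpleGraph V} (hG : Unicyclic G) {n : ℕ}
    (hn : 2 ≤ n) (hc : Fintype.card V = 2 * n) {μ : V → V} (hinv : ∀ v, μ (μ v) = v)
    (hadj : ∀ v, G.Adj v (μ v))
    (hleaf : ∀ v, (∀ w, G.Adj v w → w = μ v) ∨ (∀ w, G.Adj (μ v) w → w = v)) :
    ∃ (W : Type u) (_ : Fintype W) (H : SimpleGraph W), Unicyclic H ∧ Fintype.card W = n ∧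
      indepPoly G = indepPoly (corona H) := by
  classical
  have hleaf' : ∀ v, (∃ w, G.Adj v w ∧ w ≠ μ v) → ∀ w, G.Adj (μ v) w → w = v := by
    rintro v ⟨w, hw, hne⟩
    exact (hleaf v).resolve_left fun h => hne (h w hw)
  have hboth : ∀ v, (∀ w, G.Adj v w → w = μ v) → ∃ w, G.Adj (μ v) w ∧ w ≠ v := by
    intro v hv
    by_contra! hcon
    have hall := mem_of_closed hG.1 {v, μ v} (u := v) (by simp) (by
      rintro a (rfl | rfl) b hb
      · exact Or.inr (hv b hb)
      · exact Or.inl (hcon b hb))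
    have h1 : (Finset.univ : Finset V) ⊆ {v, μ v} := fun a _ => by
      simpa using hall a
    have h2 := Finset.card_le_card h1
    have h3 := Finset.card_le_two (a := v) (b := μ v)
    rw [Finset.card_univ] at h2
    omega
  let K : V → Prop := fun v => ∃ w, G.Adj v w ∧ w ≠ μ v
  have hK : ∀ v, ¬ K v → K (μ v) := by
    intro v hv
    have : ∀ w, G.Adj v w → w = μ v := by
      intro w hw
      by_contra hne
      exact hv ⟨w, hw, hne⟩
    obtain ⟨w, hw, hne⟩ := hboth v this
    exact ⟨w, hw, by rwa [hinv]⟩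
  have hK' : ∀ v, K v → ¬ K (μ v) := by
    rintro v hv ⟨w, hw, hne⟩
    rw [hinv] at hne
    exact hne (hleaf' v hv w hw)
  let W := {v : V // K v}
  let H : SimpleGraph W := G.comap Subtype.val
  let φ : W ⊕ W → V := Sum.elim Subtype.val fun v => μ v.val
  have hφ : Function.Bijective φ := by
    constructor
    · rintro (a | a) (b | b) hab
      · exact congrArg _ (Subtype.ext hab)
      · have hab : a.val = μ b.val := hab
        exact absurd (hab ▸ a.2) (hK' b.val b.2)
      · have hab : μ a.val = b.val := hab
        exact absurd (hab ▸ b.2) (hK' a.val a.2)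
      · have hab : μ a.val = μ b.val := hab
        have := congrArg μ hab
        rw [hinv, hinv] at this
        exact congrArg _ (Subtype.ext this)
    · intro v
      by_cases hv : K v
      · exact ⟨Sum.inl ⟨v, hv⟩, rfl⟩
      · exact ⟨Sum.inr ⟨μ v, hK v hv⟩, hinv v⟩
  have hlr : ∀ (a : W) (b : W ⊕ W), G.Adj (φ (Sum.inl a)) (φ b) ↔ (corona H).Adj (Sum.inl a) b := by
    intro a b
    rw [corona_adj_inl]
    cases b with
    | inl b =>
      simp only [Sum.inl.injEq, exists_eq_left', reduceCtorEq, or_false]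
      exact Iff.rfl
    | inr b =>
      simp only [reduceCtorEq, false_and, exists_false, false_or, Sum.inr.injEq]
      constructor
      · intro h
        exact (Subtype.ext (hleaf' b.val b.2 a.val h.symm)).symm
      · rintro rfl
        exact hadj _
  have hiso : ∀ a b : W ⊕ W, G.Adj (φ a) (φ b) ↔ (corona H).Adj a b := by
    rintro (a | a) b
    · exact hlr a b
    · cases b with
      | inl b => rw [G.adj_comm, (corona H).adj_comm]; exact hlr b _
      | inr b =>
        refine iff_of_false (fun h => ?_) (corona_adj_inr a b)
        have h1 : μ b.val = a.val := hleaf' a.val a.2 _ h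
        exact hK' b.val b.2 (h1 ▸ a.2)
  let e : corona H ≃g G := ⟨Equiv.ofBijective φ hφ, fun {a b} => hiso a b⟩
  have hcard : Fintype.card W = n := by
    have := Fintype.card_congr e.toEquiv
    rw [Fintype.card_sum] at this
    omega
  refine ⟨W, inferInstance, H, ⟨?_, ?_⟩, hcard, (indepPoly_iso e).symm⟩
  · -- contracting the pendant edges maps walks of `G` to walks of `H`
    let ρ : V → W := fun v => if hv : K v then ⟨v, hv⟩ else ⟨μ v, hK v hv⟩
    have hρK : ∀ w : W, ρ w.val = w := fun w => by
      have hw : K w.val := w.2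
      simp [ρ, hw]
    have hstep : ∀ u v, G.Adj u v → H.Reachable (ρ u) (ρ v) := by
      intro u v huv
      by_cases hu : K u
      · by_cases hv : K v
        · have : H.Adj ⟨u, hu⟩ ⟨v, hv⟩ := huv
          simpa [ρ, hu, hv] using this.reachable
        · have h1 : u = μ v := hleaf' (μ v) (hK v hv) u (by rw [hinv]; exact huv.symm)
          have : ρ u = ρ v := by
            simp only [ρ, hu, hv, dite_true, dite_false]
            exact Subtype.ext h1
          rw [this]
      · have h1 : v = μ u := hleaf' (μ u) (hK u hu) v (by rw [hinv]; exact huv)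
        have hv : K v := h1 ▸ hK u hu
        have : ρ u = ρ v := by
          simp only [ρ, hu, hv, dite_true, dite_false]
          exact Subtype.ext h1.symm
        rw [this]
    have hwalk : ∀ u v, G.Reachable u v → H.Reachable (ρ u) (ρ v) := by
      rintro u v ⟨p⟩
      induction p with
      | nil => exact Reachable.refl _
      | cons h _ ih => exact (hstep _ _ h).trans ih
    have : Nonempty W := Fintype.card_pos_iff.1 (by omega)
    refine SimpleGraph.Connected.mk fun a b => ?_
    have := hwalk a.val b.val (hG.1.preconnected _ _)
    rwa [hρK, hρK] at this
  · have h1 := ncard_edgeSet_corona H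
    rw [ncard_edgeSet_iso e, hG.2, hc, hcard] at h1
    omega

/-! ### The remaining case: a matching edge on a four-cycle -/

section FourCycle

variable {V : Type*} {G : SimpleGraph V}

lemma reachable_three {G' : SimpleGraph V} {a p q b : V} (h1 : G'.Adj a p) (h2 : G'.Adj p q)
    (h3 : G'.Adj q b) : G'.Reachable a b :=
  h1.reachable.trans (h2.reachable.trans h3.reachable)

lemma PM.map_ne {μ : V → V} (h : PM G μ) {u v : V} (huv : u ≠ v) : μ u ≠ μ v := fun e =>
  huv (by rw [← h.invol u, e, h.invol])

lemma Z_congr {G' : SimpleGraph V} (t : ℝ) {S : Finset V}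
    (h : ∀ u ∈ S, ∀ v ∈ S, G.Adj u v ↔ G'.Adj u v) : Z G t S = Z G' t S := by
  classical
  unfold Z
  refine Finset.sum_congr rfl fun A hA => ?_
  rw [Finset.mem_powerset] at hA
  have : IsIndepFinset G A ↔ IsIndepFinset G' A := by
    unfold IsIndepFinset
    exact forall₄_congr fun u hu v hv => not_congr (h u (hA hu) v (hA hv))
  simp only [this]

/-- Inclusion–exclusion for an edge `w z`: no independent set contains both ends. -/
lemma Z_pair {t : ℝ} {T : Finset V} [DecidableEq V] {w z : V} (hz : z ∈ T)
    (hwz : G.Adj w z) :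
    Z G t (T.erase z) + Z G t (T.erase w) = Z G t T + Z G t ((T.erase w).erase z) := by
  have e1 : T = insert z (T.erase z) := (Finset.insert_erase hz).symm
  have e2 : T.erase w = insert z ((T.erase w).erase z) :=
    (Finset.insert_erase (Finset.mem_erase.2 ⟨hwz.ne.symm, hz⟩)).symm
  have h1 := Z_insert G t (Finset.notMem_erase z T)
  have h2 := Z_insert G t (Finset.notMem_erase z (T.erase w))
  rw [← e1] at h1
  rw [← e2] at h2
  have h3 : dl G z (T.erase z) = dl G z ((T.erase w).erase z) := by
    ext y
    simp only [mem_dl, Finset.mem_erase]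
    have : ¬ G.Adj z y → y ≠ w := fun h e => h (e ▸ hwz.symm)
    tauto
  rw [h1, h2, h3]
  ring

variable [Fintype V]

/-- A unicyclic graph does not have two distinct edges that can both be bypassed
after deleting the two of them. -/
lemma Unicyclic.no_two_bypasses (hG : Unicyclic G) {a b c d : V} (hab : G.Adj a b)
    (hcd : G.Adj c d) (hne : s(a, b) ≠ s(c, d))
    (h1 : (G.deleteEdges {s(a, b), s(c, d)}).Reachable a b)
    (h2 : (G.deleteEdges {s(a, b), s(c, d)}).Reachable c d) : False := by
  classical
  have hconn : (G.deleteEdges {s(a, b), s(c, d)}).Connected := by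
    refine connected_of_reachable hG.1 fun u v huv => ?_
    by_cases he : s(u, v) = s(a, b)
    · rcases Sym2.eq_iff.1 he with ⟨rfl, rfl⟩ | ⟨rfl, rfl⟩
      · exact h1
      · exact h1.symm
    by_cases hf : s(u, v) = s(c, d)
    · rcases Sym2.eq_iff.1 hf with ⟨rfl, rfl⟩ | ⟨rfl, rfl⟩
      · exact h2
      · exact h2.symm
    exact (Adj.reachable (deleteEdges_adj.2 ⟨huv, by simp [he, hf]⟩))
  have h3 := hconn.card_vert_le_card_edgeSet_add_one
  rw [edgeSet_deleteEdges, Nat.card_coe_set_eq, Set.ncard_sdiff _ (Set.toFinite _),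
    Set.ncard_pair hne, hG.2, Nat.card_eq_fintype_card] at h3
  · have h4 : 2 ≤ Fintype.card V := by
      have := Fintype.card_le_of_injective (fun i : Bool => if i then a else b) (by
        intro i j hij
        have := hab.ne
        cases i <;> cases j <;> simp_all)
      simpa using this
    omega
  · rintro e (rfl | rfl)
    · exact hab
    · exact hcd

/-- Two neighbours of `μ x` other than `x` would create a second cycle. -/
lemma PM.unique {μ : V → V} (h : PM G μ) (hG : Unicyclic G) {x w z z' : V} (hw : G.Adj x w)
    (hwx : w ≠ μ x) (hz : G.Adj (μ x) z) (hzx : z ≠ x) (hz' : G.Adj (μ x) z') (hzx' : z' ≠ x) :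
    z = z' := by
  by_contra hne
  have a1 := h.adj_of_adj hw hz
  have a2 := h.adj_of_adj hw hz'
  have a3 := h.adj x
  have n1 := hw.ne
  have n2 := hz.ne
  have n3 := hz'.ne
  have n4 := a1.ne
  have n5 := a2.ne
  have n6 := a3.ne
  refine hG.no_two_bypasses hz hz' ?_
    (reachable_three (p := x) (q := w) ?_ ?_ ?_) (reachable_three (p := x) (q := w) ?_ ?_ ?_)
  · grind [Sym2.eq_iff]
  all_goals
    rw [deleteEdges_adj]
    refine ⟨by first | assumption | exact a3.symm, ?_⟩
    simp only [Set.mem_insert_iff, Set.mem_singleton_iff, Sym2.eq_iff]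
    grind

/-- Besides a matching edge `x, μ x` without ends of degree one, all matching edges are
pendant. -/
lemma PM.other_pendant {μ : V → V} (h : PM G μ) (hG : Unicyclic G) {n : ℕ} (hn : 3 ≤ n)
    (hc : Fintype.card V = 2 * n) {x w z : V} (hw : G.Adj x w)
    (hwx : w ≠ μ x) (hz : G.Adj (μ x) z) (hzx : z ≠ x) {v : V} (hvx : v ≠ x) (hvy : v ≠ μ x) :
    (∀ y, G.Adj v y → y = μ v) ∨ (∀ y, G.Adj (μ v) y → y = v) := by
  classical
  by_contra! hcon
  obtain ⟨⟨w', hw', hwv⟩, z', hz', hzv⟩ := hcon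
  have uz : ∀ y, G.Adj (μ x) y → y ≠ x → y = z := fun y hy hyx =>
    h.unique hG hw hwx hy hyx hz hzx
  have uw : ∀ y, G.Adj x y → y ≠ μ x → y = w := fun y hy hyx =>
    h.unique hG (x := μ x) hz (by rwa [h.invol]) (by rwa [h.invol]) hyx (by rwa [h.invol]) hwx
  have a1 := h.adj_of_adj hw hz
  have a2 := h.adj_of_adj hw' hz'
  have ax := h.adj x
  have av := h.adj v
  have ix := h.invol x
  have iv := h.invol v
  have iw := h.invol w
  have n1 := hw.ne
  have n2 := hz.ne
  have n3 := hw'.ne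
  have n4 := hz'.ne
  have n5 := a1.ne
  have n6 := a2.ne
  have n7 := ax.ne
  have n8 := av.ne
  have m1 : μ v ≠ x := fun e => hvy (by rw [← e, iv])
  have m2 : μ v ≠ μ x := h.map_ne hvx
  by_cases hexc : μ w = z
  · -- then `{x, μ x, w, z}` is closed under adjacency
    have uz' : ∀ y, G.Adj z y → y ≠ w → y = μ x := fun y hy hyw =>
      h.unique hG (x := w) hw.symm (by rw [hexc]; exact hzx.symm) (by rwa [hexc]) hyw
        (by rw [hexc]; exact hz.symm) hwx.symm
    have uw' : ∀ y, G.Adj w y → y ≠ z → y = x := fun y hy hyz =>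
      h.unique hG (x := z) hz.symm (by rw [← hexc, iw]; exact hwx.symm)
        (by rwa [← hexc, iw]) hyz (by rw [← hexc, iw]; exact hw.symm) hzx.symm
    have hall := mem_of_closed hG.1 {x, μ x, w, z} (u := x) (by simp) (by
      rintro a (rfl | rfl | rfl | rfl) b hb
      · by_cases hb' : b = μ a
        · simp [hb']
        · simp [uw b hb hb']
      · by_cases hb' : b = x
        · simp [hb']
        · simp [uz b hb hb']
      · by_cases hb' : b = z
        · simp [hb']
        · simp [uw' b hb hb']
      · by_cases hb' : b = w
        · simp [hb']
        · simp [uz' b hb hb'])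
    have h1 : (Finset.univ : Finset V) ⊆ {x, μ x, w, z} := fun a _ => by
      simpa using hall a
    have h2 := Finset.card_le_card h1
    have h3 := Finset.card_le_four (a := x) (b := μ x) (c := w) (d := z)
    rw [Finset.card_univ] at h2
    omega
  · -- the edges `x, μ x` and `v, μ v` are bypassed along the two four-cycles
    have k1 : ¬ (w = v ∧ z = μ v) := by rintro ⟨rfl, e⟩; exact hexc e.symm
    have k2 : ¬ (w = μ v ∧ z = v) := by rintro ⟨rfl, rfl⟩; exact hexc iv
    have k3 : ¬ (w' = x ∧ z' = μ x) := by
      rintro ⟨rfl, rfl⟩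
      have e1 := uw v hw'.symm hvy
      have e2 := uz (μ v) hz'.symm m1
      exact hexc (by rw [← e1, e2])
    have k4 : ¬ (w' = μ x ∧ z' = x) := by
      rintro ⟨rfl, rfl⟩
      have e1 := uz v hw'.symm hvx
      have e2 := uw (μ v) hz'.symm m2
      exact hexc (by rw [← e2, iv, e1])
    have k5 : ∀ y, y = v → μ y = μ v := fun y e => by rw [e]
    refine hG.no_two_bypasses ax av ?_
      (reachable_three (p := w) (q := z) ?_ ?_ ?_) (reachable_three (p := w') (q := z') ?_ ?_ ?_)
    · simp only [ne_eq, Sym2.eq_iff]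
      grind
    all_goals
      rw [deleteEdges_adj]
      refine ⟨by first | assumption | exact hz.symm | exact hz'.symm, ?_⟩
      simp only [Set.mem_insert_iff, Set.mem_singleton_iff, Sym2.eq_iff]
      grind

/-- The independence polynomial does not change when, on a four-cycle `x, w, z, y` whose vertices
`x, y` have degree two, the edge `y — z` is replaced by `x — z`. -/
lemma indepPoly_reroute {G' : SimpleGraph V} {x y w z : V} (hxy : x ≠ y) (hxz : x ≠ z) (hyz : y ≠ z) (hwz : G.Adj w z)
    (hxG : ∀ v, G.Adj x v ↔ v = y ∨ v = w) (hyG : ∀ v, G.Adj y v ↔ v = x ∨ v = z)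
    (hx' : ∀ v, G'.Adj x v ↔ v = y ∨ v = w ∨ v = z) (hy' : ∀ v, G'.Adj y v ↔ v = x)
    (hother : ∀ u v, u ≠ x → u ≠ y → v ≠ x → v ≠ y → (G.Adj u v ↔ G'.Adj u v)) :
    indepPoly G = indepPoly G' := by
  classical
  refine Polynomial.funext fun r => ?_
  rw [eval_indepPoly, eval_indepPoly]
  generalize -r = t
  obtain ⟨T, hmem⟩ : ∃ T : Finset V, ∀ v, v ∈ T ↔ v ≠ y ∧ v ≠ x :=
    ⟨(Finset.univ.erase x).erase y, fun v => by simp⟩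
  have hyT : y ∉ T := fun h => ((hmem _).1 h).1 rfl
  have hxT : x ∉ insert y T := by
    rw [Finset.mem_insert, hmem]; grind
  have huniv : (Finset.univ : Finset V) = insert x (insert y T) := by
    ext v
    simp only [Finset.mem_univ, Finset.mem_insert, hmem, true_iff]
    tauto
  have hzT : z ∈ T := (hmem z).2 ⟨hyz.symm, hxz.symm⟩
  have d1 : dl G x (insert y T) = T.erase w := by
    ext v
    simp only [mem_dl, Finset.mem_insert, Finset.mem_erase, hmem, hxG]
    grind
  have d2 : dl G y T = T.erase z := by
    ext v
    simp only [mem_dl, Finset.mem_erase, hmem, hyG]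
    grind
  have d3 : dl G' x (insert y T) = (T.erase w).erase z := by
    ext v
    simp only [mem_dl, Finset.mem_insert, Finset.mem_erase, hmem, hx']
    grind
  have d4 : dl G' y T = T := by
    ext v
    simp only [mem_dl, hmem, hy']
    grind
  have hcongr : ∀ S ⊆ T, Z G' t S = Z G t S := fun S hS => by
    refine (Z_congr t fun u hu v hv => ?_).symm
    have h1 := (hmem u).1 (hS hu)
    have h2 := (hmem v).1 (hS hv)
    exact hother u v h1.2 h1.1 h2.2 h2.1
  rw [huniv, Z_insert _ _ hxT, Z_insert _ _ hyT, Z_insert _ _ hxT, Z_insert _ _ hyT, d1, d2, d3,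
    d4, hcongr T (le_refl _),
    hcongr _ ((Finset.erase_subset _ _).trans (Finset.erase_subset _ _))]
  have := Z_pair (t := t) hzT hwz
  linear_combination (-t) * this

/-- If the matching edge `x, μ x` lies on the four-cycle `x, w, z, μ x`, then rerouting
`μ x — z` to `x — z` keeps the graph unicyclic, keeps its independence polynomial, and makes all
matching edges pendant. -/
lemma PM.reroute {μ : V → V} (h : PM G μ) (hG : Unicyclic G) {n : ℕ} (hn : 3 ≤ n)
    (hc : Fintype.card V = 2 * n) {x w z : V} (hw : G.Adj x w)
    (hwx : w ≠ μ x) (hz : G.Adj (μ x) z) (hzx : z ≠ x) :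
    ∃ G' : SimpleGraph V, Unicyclic G' ∧ indepPoly G = indepPoly G' ∧ (∀ v, G'.Adj v (μ v)) ∧
      ∀ v, (∀ y, G'.Adj v y → y = μ v) ∨ (∀ y, G'.Adj (μ v) y → y = v) := by
  classical
  have uz : ∀ y, G.Adj (μ x) y → y ≠ x → y = z := fun y hy hyx =>
    h.unique hG hw hwx hy hyx hz hzx
  have uw : ∀ y, G.Adj x y → y ≠ μ x → y = w := fun y hy hyx =>
    h.unique hG (x := μ x) hz (by rwa [h.invol]) (by rwa [h.invol]) hyx (by rwa [h.invol]) hwx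
  have a1 := h.adj_of_adj hw hz
  have ax := h.adj x
  have ix := h.invol x
  have n1 := hw.ne
  have n2 := hz.ne
  have n5 := a1.ne
  have n7 := ax.ne
  have hxz : ¬ G.Adj x z := fun hxz => n5 (uw z hxz n2.symm).symm
  let G' : SimpleGraph V := SimpleGraph.fromEdgeSet (insert s(x, z) (G.edgeSet \ {s(μ x, z)}))
  have hE : G'.edgeSet = insert s(x, z) (G.edgeSet \ {s(μ x, z)}) := by
    rw [edgeSet_fromEdgeSet, sdiff_eq_left, Set.disjoint_left]
    rintro e (rfl | he) hd
    · exact hzx (by simpa using hd : x = z).symm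
    · exact G.not_isDiag_of_mem_edgeSet he.1 hd
  have hadj' : ∀ u v, G'.Adj u v ↔ (s(u, v) = s(x, z) ∨ (G.Adj u v ∧ s(u, v) ≠ s(μ x, z))) := by
    intro u v
    rw [← SimpleGraph.mem_edgeSet, hE]
    rfl
  have hxz' : G'.Adj x z := (hadj' _ _).2 (Or.inl rfl)
  have hxy' : G'.Adj x (μ x) := (hadj' _ _).2 (Or.inr ⟨ax, by
    simp only [ne_eq, Sym2.eq_iff]; grind⟩)
  have hy' : ∀ v, G'.Adj (μ x) v ↔ v = x := by
    intro v
    constructor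
    · intro hv
      rcases (hadj' _ _).1 hv with e | ⟨hv, e⟩
      · rw [Sym2.eq_iff] at e; grind
      · by_contra hvx
        exact e (by rw [uz v hv hvx])
    · rintro rfl
      exact hxy'.symm
  have hx' : ∀ v, G'.Adj x v ↔ v = μ x ∨ v = w ∨ v = z := by
    intro v
    rw [hadj']
    simp only [ne_eq, Sym2.eq_iff]
    constructor
    · rintro (e | ⟨hv, -⟩)
      · grind
      · by_cases hv' : v = μ x
        · exact Or.inl hv'
        · exact Or.inr (Or.inl (uw v hv hv'))
    · rintro (rfl | rfl | rfl)
      · exact Or.inr ⟨ax, by grind⟩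
      · exact Or.inr ⟨hw, by grind⟩
      · exact Or.inl (by simp)
  have hother : ∀ u v, u ≠ x → u ≠ μ x → v ≠ x → v ≠ μ x → (G.Adj u v ↔ G'.Adj u v) := by
    intro u v h1 h2 h3 h4
    rw [hadj']
    simp only [ne_eq, Sym2.eq_iff]
    grind
  refine ⟨G', ⟨?_, ?_⟩, ?_, ?_, ?_⟩
  · refine connected_of_reachable hG.1 fun u v huv => ?_
    by_cases e : s(u, v) = s(μ x, z)
    · have hr : G'.Reachable (μ x) z := hxy'.symm.reachable.trans hxz'.reachable
      rcases Sym2.eq_iff.1 e with ⟨rfl, rfl⟩ | ⟨rfl, rfl⟩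
      · exact hr
      · exact hr.symm
    · exact ((hadj' u v).2 (Or.inr ⟨huv, e⟩)).reachable
  · rw [hE, Set.ncard_exchange, hG.2]
    · exact hxz
    · exact hz
  · have hxG : ∀ v, G.Adj x v ↔ v = μ x ∨ v = w := fun v => by
      constructor
      · intro hv
        by_cases e : v = μ x
        · exact Or.inl e
        · exact Or.inr (uw v hv e)
      · rintro (rfl | rfl)
        · exact ax
        · exact hw
    have hyG : ∀ v, G.Adj (μ x) v ↔ v = x ∨ v = z := fun v => by
      constructor
      · intro hv
        by_cases e : v = x
        · exact Or.inl e
        · exact Or.inr (uz v hv e)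
      · rintro (rfl | rfl)
        · exact ax.symm
        · exact hz
    exact indepPoly_reroute n7 hzx.symm n2 a1 hxG hyG hx' hy' hother
  · intro v
    refine (hadj' _ _).2 (Or.inr ⟨h.adj v, fun e => ?_⟩)
    have hinv := h.invol v
    rcases Sym2.eq_iff.1 e with ⟨h1, h2⟩ | ⟨h1, h2⟩
    · rw [h1, ix] at h2; exact hzx h2.symm
    · have := h.map_ne (u := v) (v := x)
      grind
  · have hpend : ∀ v, v ≠ x → v ≠ μ x → (∀ y, G.Adj v y → y = μ v) →
        ∀ y, G'.Adj v y → y = μ v := by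
      intro v h1 h2 hv y hy
      have hvz : v ≠ z := by
        rintro rfl
        have := hv _ hz.symm
        exact h.map_ne h1.symm this
      rcases (hadj' _ _).1 hy with e | ⟨hy, -⟩
      · rw [Sym2.eq_iff] at e; grind
      · exact hv y hy
    intro v
    by_cases hvx : v = x
    · subst hvx
      exact Or.inr fun y hy => (hy' y).1 hy
    by_cases hvy : v = μ x
    · subst hvy
      exact Or.inl fun y hy => by rw [ix]; exact (hy' y).1 hy
    have m1 : μ v ≠ x := fun e => hvy (by rw [← e, h.invol])
    have m2 : μ v ≠ μ x := h.map_ne hvx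
    rcases h.other_pendant hG hn hc hw hwx hz hzx hvx hvy with hv | hv
    · exact Or.inl (hpend v hvx hvy hv)
    · have := hpend (μ v) m1 m2 (by rwa [h.invol])
      rw [h.invol] at this
      exact Or.inr this

end FourCycle

/-- A well-covered unicyclic graph of order `2n` has the independence polynomial of the corona of a
unicyclic graph of order `n`. -/
lemma exists_corona_of_wellCovered.{u} {V : Type u} [Fintype V] {G : SimpleGraph V}
    (hG : Unicyclic G) (hwc : WellCovered G) {n : ℕ} (hn : 3 ≤ n)
    (hc : Fintype.card V = 2 * n) :
    ∃ (W : Type u) (_ : Fintype W) (H : SimpleGraph W), Unicyclic H ∧ Fintype.card W = n ∧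
      indepPoly G = indepPoly (corona H) := by
  classical
  have hiso : ∀ v, ∃ w, G.Adj v w := by
    intro v
    have : Nontrivial V := Fintype.one_lt_card_iff_nontrivial.1 (by omega)
    exact hG.1.preconnected.exists_adj_of_nontrivial v
  obtain ⟨A, hA, hAn⟩ := hG.exists_indep hc
  obtain ⟨μ, h⟩ := hwc.exists_PM hiso hc hA hAn
  by_cases hall : ∀ v, (∀ w, G.Adj v w → w = μ v) ∨ (∀ w, G.Adj (μ v) w → w = v)
  · exact exists_corona hG (by omega) hc h.invol h.adj hall
  · push Not at hall
    obtain ⟨x, ⟨w, hw, hwx⟩, z, hz, hzx⟩ := hall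
    obtain ⟨G', hG', hpoly, hadj, hleaf⟩ := h.reroute hG hn hc hw hwx hz hzx
    rw [hpoly]
    exact exists_corona hG' (by omega) hc h.invol hadj hleaf

/-- If `G` is a connected well-covered unicyclic graph of order `2n` (`n ≥ 3`),
then `C_n* ⪯ G` and `G ⪯ U_n*`. -/
theorem stmt8 {V : Type*} [Fintype V] (n : ℕ) (hn : 3 ≤ n) (G : SimpleGraph V)
    (hcard : Fintype.card V = 2 * n) (hG : Unicyclic G) (hwc : WellCovered G) :
    Pre (corona (cycleGraph n)) G ∧ Pre G (corona (Ugraph n)) := by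
  classical
  obtain ⟨W, _, H, hH, hc, hp⟩ := exists_corona_of_wellCovered hG hwc hn hcard
  have h1 := corona_lower hn hc hH
  have h2 := corona_upper hn hc hH
  unfold Pre xi at h1 h2 ⊢
  rw [hp]
  exact ⟨h1, h2⟩
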